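/- arXiv:2406.07223 — 3 statements merged into one kernel-verified Lean document; each statement's English description precedes it below -/
import Mathlib

section
/- Let k be a field of characteristic zero and X ⊂ P^{2n+1} a smooth cubic hypersurface over k. If X contains two skew n-planes defined over a quadratic extension of k, that are conjugate over k, then X is rational over k. -/
open MvPolynomial

/-- Dehomogenization of a polynomial in `m + 1` variables at the `i`-th variable:
substitute `x_i = 1` and renumber the remaining variables by `0, …, m - 1`. -/
noncomputable def dehom (k : Type) [Field k] (m : ℕ) (i : Fin (m + 1))
    (F : MvPolynomial (Fin (m + 1)) k) : MvPolynomial (Fin m) k :=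
  aeval (fun j : Fin (m + 1) =>
    if h : j = i then (1 : MvPolynomial (Fin m) k)
    else X ⟨if j.1 < i.1 then j.1 else j.1 - 1, by
      have hne : (j : ℕ) ≠ (i : ℕ) := fun hh => h (Fin.ext hh)
      have hj := j.isLt; have hi := i.isLt
      split <;> omega⟩) F

/-- A projective hypersurface `{F = 0} ⊂ P^m` is rational over `k`: for some standard
affine chart `{x_i = 1}` the fraction field of the corresponding affine coordinate ring
is `k`-isomorphic to `k(x₁, …, x_{m-1})`. -/
def IsRationalHypersurface (k : Type) [Field k] (m : ℕ)
    (F : MvPolynomial (Fin (m + 1)) k) : Prop :=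
  ∃ i : Fin (m + 1),
    Nonempty ((FractionRing (MvPolynomial (Fin m) k ⧸ Ideal.span {dehom k m i F}))
      ≃ₐ[k] FractionRing (MvPolynomial (Fin (m - 1)) k))


theorem homog_aeval_smul {k A ι : Type*} [Field k] [CommRing A] [Algebra k A]
    {F : MvPolynomial ι k} {d : ℕ} (hF : F.IsHomogeneous d) (c : A) (v : ι → A) :
    aeval (fun i => c * v i) F = c ^ d * aeval v F := by
  rw [aeval_def, aeval_def, eval₂_eq, eval₂_eq, Finset.mul_sum]
  refine Finset.sum_congr rfl fun e he => ?_
  have h1 := hF.degree_eq_sum_deg_support he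
  simp only [mul_pow, Finset.prod_mul_distrib, Finset.prod_pow_eq_pow_sum]
  rw [← h1]
  ring

theorem homog_one_linear {k ι : Type*} [Field k]
    {F : MvPolynomial ι k} (hF : F.IsHomogeneous 1) :
    ∃ T : (ι → k) →ₗ[k] k, ∀ v, eval v F = T v := by
  have h : F ∈ homogeneousSubmodule ι k 1 := hF
  rw [homogeneousSubmodule_one_eq_span_X] at h
  induction h using Submodule.span_induction with
  | mem x hx =>
    obtain ⟨i, rfl⟩ := hx
    exact ⟨LinearMap.proj i, fun v => by simp⟩
  | zero => exact ⟨0, fun v => by simp⟩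
  | add x y hx hy ihx ihy =>
    obtain ⟨T, hT⟩ := ihx (by rw [← mem_homogeneousSubmodule, homogeneousSubmodule_one_eq_span_X]; exact hx)
    obtain ⟨T', hT'⟩ := ihy (by rw [← mem_homogeneousSubmodule, homogeneousSubmodule_one_eq_span_X]; exact hy)
    exact ⟨T + T', fun v => by simp [hT, hT']⟩
  | smul a x hx ihx =>
    obtain ⟨T, hT⟩ := ihx (by rw [← mem_homogeneousSubmodule, homogeneousSubmodule_one_eq_span_X]; exact hx)
    exact ⟨a • T, fun v => by simp [hT]⟩

theorem poly_eval_aeval {k ι : Type*} [Field k] (p : ι → Polynomial k) (Q : MvPolynomial ι k)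
    (s : k) : (aeval p Q).eval s = eval (fun i => (p i).eval s) Q := by
  have := congrArg (fun φ => φ Q) (comp_aeval (R := k) p (Polynomial.aeval s))
  simpa [aeval_eq_eval, Polynomial.coe_aeval_eq_eval] using this

/-- Over an algebraically closed field a quadratic form has a nontrivial zero on a
pencil spanned by two independent vectors. -/
theorem quad_zero {k ι : Type*} [Field k] [IsAlgClosed k]
    {Q : MvPolynomial ι k} (hQ : Q.IsHomogeneous 2) (v w : ι → k) :
    eval w Q = 0 ∨ ∃ s : k, eval (fun i => v i + s * w i) Q = 0 := by
  let q : Polynomial k := aeval (fun i => Polynomial.C (v i) + Polynomial.X * Polynomial.C (w i)) Q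
  let r : Polynomial k := aeval (fun i => Polynomial.X * Polynomial.C (v i) + Polynomial.C (w i)) Q
  have hq : ∀ s, q.eval s = eval (fun i => v i + s * w i) Q := by
    intro s
    simp only [q, poly_eval_aeval, Polynomial.eval_add, Polynomial.eval_mul, Polynomial.eval_C,
      Polynomial.eval_X]
  have hr : ∀ s, r.eval s = eval (fun i => s * v i + w i) Q := by
    intro s
    simp only [r, poly_eval_aeval, Polynomial.eval_add, Polynomial.eval_mul, Polynomial.eval_C,
      Polynomial.eval_X]
  by_cases hdeg : q.degree = 0
  · left
    obtain ⟨c, hc⟩ : ∃ c, q = Polynomial.C c := ⟨_, Polynomial.eq_C_of_degree_eq_zero hdeg⟩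
    have key : Polynomial.X * (r - Polynomial.X ^ 2 * Polynomial.C c) = 0 := by
      refine Polynomial.funext fun t => ?_
      by_cases ht : t = 0
      · simp [ht]
      · have h1 := homog_aeval_smul hQ t (fun i => v i + t⁻¹ * w i)
        simp only [aeval_eq_eval] at h1
        have h2 : (fun i => t * (v i + t⁻¹ * w i)) = fun i => t * v i + w i := by
          funext i; field_simp
        rw [h2, ← hr, ← hq, hc] at h1
        simp only [Polynomial.eval_mul, Polynomial.eval_sub, h1, Polynomial.eval_X,
          Polynomial.eval_pow, Polynomial.eval_C, Polynomial.eval_zero, sub_self, mul_zero]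
    have h3 : r = Polynomial.X ^ 2 * Polynomial.C c := by
      have := (mul_eq_zero.mp key).resolve_left Polynomial.X_ne_zero
      exact sub_eq_zero.mp this
    have := hr 0
    rw [h3] at this
    simpa using this.symm
  · right
    obtain ⟨s, hs⟩ := IsAlgClosed.exists_root q hdeg
    exact ⟨s, by rw [← hq]; exact hs⟩

theorem no_linear_factor (k : Type*) [Field k] (N : ℕ) (hN : 3 ≤ N)
    (F : MvPolynomial (Fin N) k)
    (hsmooth : ∀ v : Fin N → AlgebraicClosure k, v ≠ 0 →
      eval v (map (algebraMap k (AlgebraicClosure k)) F) = 0 →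
      ∃ i, eval v (pderiv i (map (algebraMap k (AlgebraicClosure k)) F)) ≠ 0)
    (L Q : MvPolynomial (Fin N) k) (hL : L.IsHomogeneous 1) (hQ : Q.IsHomogeneous 2) :
    F ≠ L * Q := by
  intro hF
  have hL' := hL.map (algebraMap k (AlgebraicClosure k))
  have hQ' := hQ.map (algebraMap k (AlgebraicClosure k))
  rw [hF, map_mul] at hsmooth
  generalize MvPolynomial.map (algebraMap k (AlgebraicClosure k)) L = L' at *
  generalize MvPolynomial.map (algebraMap k (AlgebraicClosure k)) Q = Q' at *
  obtain ⟨T, hT⟩ := homog_one_linear hL'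
  have hker : 2 ≤ Module.finrank (AlgebraicClosure k) (LinearMap.ker T) := by
    have h1 := T.finrank_range_add_finrank_ker
    have h2 : Module.finrank (AlgebraicClosure k) (LinearMap.range T) ≤ 1 := by
      simpa using Submodule.finrank_le (LinearMap.range T)
    simp at h1
    omega
  have hind := (Module.finBasis (AlgebraicClosure k) (LinearMap.ker T)).linearIndependent
  let v := (Module.finBasis (AlgebraicClosure k) (LinearMap.ker T)) ⟨0, by omega⟩
  let w := (Module.finBasis (AlgebraicClosure k) (LinearMap.ker T)) ⟨1, by omega⟩
  have hind2 : LinearIndependent (AlgebraicClosure k) ![v, w] := by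
    have := hind.comp (![⟨0, by omega⟩, ⟨1, by omega⟩]) (by
      intro a b; fin_cases a <;> fin_cases b <;> simp)
    convert! this using 1
    funext a; fin_cases a <;> rfl
  rw [LinearIndependent.pair_iff] at hind2
  have key : ∃ x : LinearMap.ker T, x ≠ 0 ∧ eval (x : Fin N → AlgebraicClosure k) Q' = 0 := by
    rcases quad_zero hQ' (v : Fin N → AlgebraicClosure k) w with h | ⟨s, hs⟩
    · refine ⟨w, fun h0 => ?_, h⟩
      have := hind2 0 1 (by simp [h0])
      simp at this
    · refine ⟨v + s • w, fun h0 => ?_, ?_⟩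
      · have := hind2 1 s (by simpa using h0)
        simp at this
      · convert! hs using 2
  obtain ⟨x, hx0, hxQ⟩ := key
  have hxL : eval (x : Fin N → AlgebraicClosure k) L' = 0 := by
    rw [hT]; exact x.2
  obtain ⟨i, hi⟩ := hsmooth x (by simpa using hx0) (by simp [hxQ])
  apply hi
  simp [hxQ, hxL, Derivation.leibniz]

/-- dehomogenization at the zeroth coordinate -/
noncomputable def dh (k : Type*) [Field k] (m : ℕ) :
    MvPolynomial (Fin (m + 1)) k →ₐ[k] MvPolynomial (Fin m) k :=
  aeval (Fin.cases 1 X)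

theorem dh_inj (k : Type*) [Field k] [Infinite k] (m d : ℕ) (P : MvPolynomial (Fin (m + 1)) k)
    (hP : P.IsHomogeneous d) (h : dh k m P = 0) : P = 0 := by
  have key : X 0 * P = 0 := by
    refine MvPolynomial.funext fun v => ?_
    by_cases hv : v 0 = 0
    · simp [hv]
    · have h1 := homog_aeval_smul hP (v 0) (fun i => (v 0)⁻¹ * v i)
      have h2 : (fun i => v 0 * ((v 0)⁻¹ * v i)) = v := by
        funext i; field_simp
      have h3 : aeval (fun i : Fin m => (v 0)⁻¹ * v i.succ) (dh k m P) =
          aeval (fun i => (v 0)⁻¹ * v i) P := by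
        rw [dh, ← AlgHom.comp_apply, comp_aeval]
        congr 2
        funext i
        refine Fin.cases ?_ (fun j => ?_) i
        · simp [hv]
        · simp
      rw [h2, ← h3, h] at h1
      simp only [aeval_eq_eval] at h1
      simp [h1]
  exact (mul_eq_zero.mp key).resolve_left (X_ne_zero _)

theorem exists_homog (k : Type*) [Field k] (m d : ℕ) (g : MvPolynomial (Fin m) k)
    (hg : g.totalDegree ≤ d) :
    ∃ G : MvPolynomial (Fin (m + 1)) k, G.IsHomogeneous d ∧ dh k m G = g := by
  refine ⟨∑ e ∈ g.support, X 0 ^ (d - e.degree) * rename Fin.succ (monomial e (coeff e g)),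
    ?_, ?_⟩
  · refine IsHomogeneous.sum _ _ _ fun e he => ?_
    have h1 : e.degree ≤ d := (le_totalDegree he).trans hg
    have h2 : (rename Fin.succ (monomial e (coeff e g)) : MvPolynomial (Fin (m+1)) k).IsHomogeneous e.degree :=
      (isHomogeneous_monomial _ rfl).rename_isHomogeneous
    have h3 := (isHomogeneous_X_pow (R := k) (0 : Fin (m+1)) (d - e.degree)).mul h2
    rwa [Nat.sub_add_cancel h1] at h3
  · rw [map_sum]
    conv_rhs => rw [g.as_sum]
    refine Finset.sum_congr rfl fun e he => ?_
    rw [dh, map_mul, map_pow, aeval_X, aeval_rename]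
    simp only [Fin.cases_zero, one_pow, one_mul]
    have : ((fun i => Fin.cases 1 X i : Fin (m+1) → MvPolynomial (Fin m) k) ∘ Fin.succ) = X := by
      funext i; simp
    rw [this, aeval_X_left, AlgHom.id_apply]

theorem dh_totalDegree_le (k : Type*) [Field k] (m d : ℕ) (P : MvPolynomial (Fin (m + 1)) k)
    (hP : P.IsHomogeneous d) : (dh k m P).totalDegree ≤ d := by
  rw [dh, aeval_def, eval₂_eq]
  refine totalDegree_finsetSum_le fun e he => ?_
  refine (totalDegree_mul _ _).trans ?_
  have h1 : (algebraMap k (MvPolynomial (Fin m) k) (coeff e P)).totalDegree = 0 := by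
    simp [algebraMap_eq]
  rw [h1, zero_add]
  refine (totalDegree_finsetProd _ _).trans ?_
  rw [hP.degree_eq_sum_deg_support he]
  refine Finset.sum_le_sum fun i _ => ?_
  refine (totalDegree_pow _ _).trans ?_
  have : (Fin.cases 1 X i : MvPolynomial (Fin m) k).totalDegree ≤ 1 := by
    refine Fin.cases ?_ (fun j => ?_) i <;> simp
  nlinarith

theorem dh_irreducible (k : Type*) [Field k] [Infinite k] (m : ℕ)
    (F : MvPolynomial (Fin (m + 1)) k) (hF : F.IsHomogeneous 3)
    (hno : ∀ L Q : MvPolynomial (Fin (m + 1)) k, L.IsHomogeneous 1 → Q.IsHomogeneous 2 → F ≠ L * Q) :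
    Irreducible (dh k m F) := by
  have hX : dh k m (X 0) = 1 := by simp [dh]
  -- general factorization principle
  have fact : ∀ (a b : ℕ) (g h : MvPolynomial (Fin m) k), a + b = 3 → g.totalDegree ≤ a →
      h.totalDegree ≤ b → dh k m F = g * h →
      ∃ G H : MvPolynomial (Fin (m + 1)) k, G.IsHomogeneous a ∧ H.IsHomogeneous b ∧ F = G * H := by
    intro a b g h hab hg hh hfg
    obtain ⟨G, hG, hG'⟩ := exists_homog k m a g hg
    obtain ⟨H, hH, hH'⟩ := exists_homog k m b h hh
    refine ⟨G, H, hG, hH, ?_⟩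
    have hGH := hG.mul hH
    rw [hab] at hGH
    refine sub_eq_zero.mp (dh_inj k m 3 _ (hF.sub hGH) ?_)
    rw [map_sub, map_mul, hG', hH', hfg, sub_self]
  have no1 : ∀ g h : MvPolynomial (Fin m) k, g.totalDegree ≤ 1 →
      h.totalDegree ≤ 2 → dh k m F ≠ g * h := by
    intro g h hg hh hfg
    obtain ⟨G, H, hG, hH, h⟩ := fact 1 2 g h rfl hg hh hfg
    exact hno G H hG hH h
  have hne : dh k m F ≠ 0 := by
    intro h0
    exact no1 0 0 (by simp) (by simp) (by simp [h0])
  refine irreducible_iff.mpr ⟨fun hu => ?_, fun g h hgh => ?_⟩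
  · have := (isUnit_iff_totalDegree_of_isReduced.mp hu).2
    exact no1 1 _ (by simp) (by omega) (one_mul _).symm
  · have hg0 : g ≠ 0 := by rintro rfl; simp at hgh; exact hne hgh
    have hh0 : h ≠ 0 := by rintro rfl; simp at hgh; exact hne hgh
    have hdeg := dh_totalDegree_le k m 3 F hF
    have hunit : ∀ g : MvPolynomial (Fin m) k, g ≠ 0 → g.totalDegree = 0 → IsUnit g := by
      intro g hg hgd
      rw [totalDegree_eq_zero_iff_eq_C] at hgd
      rw [hgd]
      refine IsUnit.map C (IsUnit.mk0 _ fun h0 => hg ?_)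
      rw [hgd, h0, C_0]
    have hsum := totalDegree_mul_of_isDomain hg0 hh0
    rw [← hgh] at hsum
    by_contra hcon
    push Not at hcon
    have h1 : g.totalDegree ≠ 0 := fun h => hcon.1 (hunit g hg0 h)
    have h2 : h.totalDegree ≠ 0 := fun h => hcon.2 (hunit _ hh0 h)
    by_cases h3 : g.totalDegree ≤ 1
    · exact no1 g h h3 (by omega) hgh
    · exact no1 h g (by omega) (by omega) (by rw [hgh, mul_comm])

/-- if a form of degree three vanishes on `x₀ = 0` it has a linear factor -/
theorem zero_hyperplane_factor (k : Type*) [Field k] (m : ℕ)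
    (F : MvPolynomial (Fin (m + 1)) k) (hF : F.IsHomogeneous 3)
    (h0 : aeval (Fin.cons 0 X : Fin (m + 1) → MvPolynomial (Fin m) k) F = 0) :
    ∃ Q : MvPolynomial (Fin (m + 1)) k, Q.IsHomogeneous 2 ∧ F = X 0 * Q := by
  have h1 : (finSuccEquiv k m F).coeff 0 = 0 := by
    have h2 : (((Polynomial.aeval (0 : MvPolynomial (Fin m) k)).restrictScalars k).comp
        (finSuccEquiv k m).toAlgHom) = aeval (Fin.cons 0 X : Fin (m + 1) → MvPolynomial (Fin m) k) := by
      refine MvPolynomial.algHom_ext fun i => ?_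
      refine Fin.cases ?_ (fun j => ?_) i
      · have := finSuccEquiv_X_zero (R := k) (n := m)
        simp [this]
      · have := finSuccEquiv_X_succ (R := k) (n := m) (j := j)
        simp [this]
    rw [Polynomial.coeff_zero_eq_aeval_zero]
    rw [← h2] at h0
    exact h0
  obtain ⟨q, hq⟩ := Polynomial.X_dvd_iff.mpr h1
  have hF' : F = X 0 * (finSuccEquiv k m).symm q := by
    apply (finSuccEquiv k m).injective
    rw [map_mul, finSuccEquiv_X_zero, AlgEquiv.apply_symm_apply, hq]
  refine ⟨_, ?_, hF'⟩
  intro e he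
  have h2 : coeff (Finsupp.single 0 1 + e) F ≠ 0 := by
    rw [hF', coeff_X_mul]; exact he
  have h3 := hF h2
  rw [map_add] at h3
  simp [Finsupp.weight_single] at h3 ⊢
  omega


theorem quad_ext (k K : Type*) [Field k] [CharZero k]
    [Field K] [Algebra k K] (hquad : Module.finrank k K = 2)
    (σ : K ≃ₐ[k] K) (hσ : σ ≠ AlgEquiv.refl) :
    ∃ (d : k) (δ : K), δ * δ = algebraMap k K d ∧ σ δ = -δ ∧
      (∀ x : K, ∃ a b : k, x = algebraMap k K a + δ * algebraMap k K b) ∧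
      (∀ a b : k, algebraMap k K a + δ * algebraMap k K b = 0 → a = 0 ∧ b = 0) := by
  obtain ⟨x, hx⟩ : ∃ x : K, ∀ a : k, algebraMap k K a ≠ x := by
    by_contra hcon
    push Not at hcon
    have : Module.finrank k K ≤ 1 :=
      finrank_le_one (1 : K) fun w => by
        obtain ⟨a, ha⟩ := hcon w
        exact ⟨a, by rw [Algebra.smul_def, mul_one, ha]⟩
    omega
  have ind : ∀ a b : k, algebraMap k K a + x * algebraMap k K b = 0 → a = 0 ∧ b = 0 := by
    intro a b hab
    by_cases hb : b = 0
    · subst hb; simpa using hab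
    · exfalso
      apply hx (-a / b)
      have hb' : algebraMap k K b ≠ 0 := by simpa using hb
      rw [map_div₀, map_neg]
      field_simp
      linear_combination -hab
  have hli : LinearIndependent k ![(1 : K), x] := by
    rw [LinearIndependent.pair_iff]
    intro s t hst
    apply ind
    rw [Algebra.smul_def, Algebra.smul_def] at hst
    linear_combination hst
  have hspan := hli.span_eq_top_of_card_eq_finrank (by simp [hquad])
  have gen : ∀ y : K, ∃ a b : k, y = algebraMap k K a + x * algebraMap k K b := by
    intro y
    have hy : y ∈ Submodule.span k (Set.range ![(1 : K), x]) := by rw [hspan]; trivial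
    simp only [Matrix.range_cons, Matrix.range_empty, Set.union_empty] at hy
    rw [Set.singleton_union, Submodule.mem_span_pair] at hy
    obtain ⟨a, b, hab⟩ := hy
    refine ⟨a, b, ?_⟩
    rw [← hab, Algebra.smul_def, Algebra.smul_def]
    ring
  obtain ⟨p, q, hpq⟩ := gen (x * x)
  have h2 : (2 : K) ≠ 0 := by
    have := charZero_of_injective_algebraMap (algebraMap k K).injective
    exact two_ne_zero
  let δ : K := x - algebraMap k K (q / 2)
  have hδ : δ * δ = algebraMap k K (p + q ^ 2 / 4) := by
    have h4 : (4 : K) ≠ 0 := by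
      have := mul_ne_zero h2 h2
      norm_num at this; exact this
    simp only [δ, map_add, map_div₀, map_pow, map_ofNat]
    field_simp
    linear_combination 16 * hpq
  have gen' : ∀ y : K, ∃ a b : k, y = algebraMap k K a + δ * algebraMap k K b := by
    intro y
    obtain ⟨a, b, hab⟩ := gen y
    refine ⟨a + q / 2 * b, b, ?_⟩
    rw [hab]
    simp only [δ, map_add, map_mul]
    ring
  have ind' : ∀ a b : k, algebraMap k K a + δ * algebraMap k K b = 0 → a = 0 ∧ b = 0 := by
    intro a b hab
    have := ind (a - q / 2 * b) b (by
      rw [← hab]; simp only [δ, map_sub, map_mul]; ring)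
    obtain ⟨h1, rfl⟩ := this
    simpa using h1
  refine ⟨_, δ, hδ, ?_, gen', ind'⟩
  have h3 : (σ δ - δ) * (σ δ + δ) = 0 := by
    have := congrArg σ hδ
    rw [map_mul, σ.commutes] at this
    linear_combination this - hδ
  rcases mul_eq_zero.mp h3 with h | h
  · exfalso
    apply hσ
    ext y
    obtain ⟨a, b, rfl⟩ := gen' y
    rw [map_add, map_mul, σ.commutes, σ.commutes, sub_eq_zero.mp h]
    rfl
  · exact eq_neg_of_add_eq_zero_left h

theorem adapted_basis {K V : Type*} [Field K] [AddCommGroup V] [Module K V] (n : ℕ)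
    (hd : Module.finrank K V = n + 1) (T : V →ₗ[K] K) (hT0 : ∃ x, T x ≠ 0) :
    ∃ e : Fin (n + 1) → V, LinearIndependent K e ∧ T (e 0) = 1 ∧ ∀ j : Fin n, T (e j.succ) = 0 := by
  have : FiniteDimensional K V := Module.finite_of_finrank_eq_succ hd
  have hsurj : LinearMap.range T = ⊤ := by
    rw [LinearMap.range_eq_top]
    apply LinearMap.surjective_of_ne_zero
    obtain ⟨x, hx⟩ := hT0
    intro h; apply hx; rw [h]; rfl
  have hker : Module.finrank K (LinearMap.ker T) = n := by
    have := T.finrank_range_add_finrank_ker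
    rw [hsurj, finrank_top, hd, Module.finrank_self] at this
    omega
  obtain ⟨e0, he0⟩ : ∃ e0, T e0 = 1 := LinearMap.range_eq_top.mp hsurj 1
  let B := Module.finBasisOfFinrankEq K (LinearMap.ker T) hker
  refine ⟨Fin.cons e0 (fun j => (B j : V)), ?_, he0, fun j => (B j).2⟩
  rw [linearIndependent_finCons]
  refine ⟨B.linearIndependent.map' (LinearMap.ker T).subtype (Submodule.ker_subtype _), ?_⟩
  intro hmem
  have : e0 ∈ LinearMap.ker T := by
    refine Submodule.span_le.mpr ?_ hmem
    rintro _ ⟨j, rfl⟩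
    exact (B j).2
  rw [LinearMap.mem_ker, he0] at this
  exact one_ne_zero this

theorem lin_alg (k K : Type) [Field k] [CharZero k]
    [Field K] [Algebra k K] (σ : K ≃ₐ[k] K) (n : ℕ)
    (H₁ H₂ : Submodule K (Fin (2 * n + 2) → K))
    (hd₁ : Module.finrank K H₁ = n + 1) (hd₂ : Module.finrank K H₂ = n + 1)
    (hskew : H₁ ⊓ H₂ = ⊥)
    (hconj : ∀ x : Fin (2 * n + 2) → K, x ∈ H₁ ↔ (fun i => σ (x i)) ∈ H₂)
    (d : k) (δ : K) (hδ : δ * δ = algebraMap k K d) (hσδ : σ δ = -δ)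
    (gen : ∀ x : K, ∃ a b : k, x = algebraMap k K a + δ * algebraMap k K b)
    (ind : ∀ a b : k, algebraMap k K a + δ * algebraMap k K b = 0 → a = 0 ∧ b = 0) :
    ∃ a b U V : Fin (n + 1) → Fin (2 * n + 2) → k,
      (∀ j, (fun i => algebraMap k K (a j i) + δ * algebraMap k K (b j i)) ∈ H₁) ∧
      (∀ j, (fun i => algebraMap k K (a j i) - δ * algebraMap k K (b j i)) ∈ H₂) ∧
      (a 0 0 = 1 ∧ b 0 0 = 0 ∧ ∀ j : Fin n, a j.succ 0 = 0 ∧ b j.succ 0 = 0) ∧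
      (∀ i i', ∑ j, (U j i' * a j i + V j i' * b j i) = if i = i' then 1 else 0) ∧
      (∀ j j', ∑ i, U j i * a j' i = if j = j' then 1 else 0) ∧
      (∀ j j', ∑ i, U j i * b j' i = 0) ∧
      (∀ j j', ∑ i, V j i * a j' i = 0) ∧
      (∀ j j', ∑ i, V j i * b j' i = if j = j' then 1 else 0) := by
  have htop : H₁ ⊔ H₂ = ⊤ := by
    apply Submodule.eq_top_of_finrank_eq
    have := Submodule.finrank_sup_add_finrank_inf_eq H₁ H₂
    rw [hskew, finrank_bot, hd₁, hd₂] at this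
    rw [Module.finrank_fin_fun]
    omega
  have hδ0 : δ ≠ 0 := by
    intro h
    have := ind 0 1 (by simp [h])
    simp at this
  have h2 : (2 : K) ≠ 0 := by
    have := charZero_of_injective_algebraMap (algebraMap k K).injective
    exact two_ne_zero
  let T : H₁ →ₗ[K] K := (LinearMap.proj 0).comp H₁.subtype
  have hT : ∀ x, T x = (x : Fin (2 * n + 2) → K) 0 := fun x => rfl
  have hT0 : ∃ x, T x ≠ 0 := by
    by_contra hcon
    push Not at hcon
    have h1 : ∀ x ∈ H₁, x 0 = 0 := fun x hx => hcon ⟨x, hx⟩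
    have h2 : ∀ x ∈ H₂, x 0 = 0 := by
      intro x hx
      have h3 : (fun i => σ.symm (x i)) ∈ H₁ := by
        rw [hconj]; simpa using hx
      have := h1 _ h3
      simpa using this
    have h3 : (fun _ => 1 : Fin (2 * n + 2) → K) ∈ H₁ ⊔ H₂ := by rw [htop]; trivial
    obtain ⟨y, hy, z, hz, hyz⟩ := Submodule.mem_sup.mp h3
    have := congrFun hyz 0
    simp [h1 y hy, h2 z hz] at this
  obtain ⟨e, heli, he_zero, he_succ⟩ := adapted_basis n hd₁ T hT0
  simp only [hT] at he_zero he_succ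
  choose a b hab using fun (j : Fin (n + 1)) (i : Fin (2 * n + 2)) =>
    gen ((e j : Fin (2 * n + 2) → K) i)
  have hH1 : ∀ j, (fun i => algebraMap k K (a j i) + δ * algebraMap k K (b j i)) ∈ H₁ := by
    intro j
    have := (e j).2
    convert! this using 1
    funext i; exact (hab j i).symm
  have hH2 : ∀ j, (fun i => algebraMap k K (a j i) - δ * algebraMap k K (b j i)) ∈ H₂ := by
    intro j
    have := (hconj _).mp (hH1 j)
    simpa [hσδ, sub_eq_add_neg] using this
  have hli : LinearIndependent k (Sum.elim a b) := by
    rw [Fintype.linearIndependent_iff]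
    intro g hg
    rw [Fintype.sum_sum_type] at hg
    simp only [Sum.elim_inl, Sum.elim_inr] at hg
    set x : Fin (2 * n + 2) → K := ∑ j, (algebraMap k K (g (Sum.inr j)) + δ * algebraMap k K (g (Sum.inl j))) • (e j : Fin (2 * n + 2) → K) with hx
    have hx1 : x ∈ H₁ := Submodule.sum_mem _ fun j _ => Submodule.smul_mem _ _ (e j).2
    have hx2 : x ∈ H₂ := by
      have : x = ∑ j, (algebraMap k K (g (Sum.inr j)) - δ * algebraMap k K (g (Sum.inl j))) • (fun i => algebraMap k K (a j i) - δ * algebraMap k K (b j i)) := by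
        rw [← sub_eq_zero, hx, ← Finset.sum_sub_distrib]
        funext i
        have hgi := congrArg (algebraMap k K) (congrFun hg i)
        simp only [Finset.sum_apply, Pi.add_apply, Pi.smul_apply, smul_eq_mul, Pi.zero_apply,
          map_zero, map_add, map_sum, map_mul] at hgi
        rw [← Finset.sum_add_distrib] at hgi
        simp only [Finset.sum_apply, Pi.sub_apply, Pi.smul_apply, smul_eq_mul, Pi.zero_apply]
        rw [← mul_zero (2 * δ), ← hgi, Finset.mul_sum]
        refine Finset.sum_congr rfl fun j _ => ?_
        rw [hab j i]
        ring
      rw [this]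
      exact Submodule.sum_mem _ fun j _ => Submodule.smul_mem _ _ (hH2 j)
    have hx0 : x = 0 := by
      have : x ∈ H₁ ⊓ H₂ := ⟨hx1, hx2⟩
      rwa [hskew] at this
    have hx0' : ∑ j, (algebraMap k K (g (Sum.inr j)) + δ * algebraMap k K (g (Sum.inl j))) • e j = 0 := by
      apply Subtype.ext
      rw [Submodule.coe_sum]
      simpa using hx0
    have := Fintype.linearIndependent_iff.mp heli _ hx0'
    rintro (j | j)
    · exact (ind _ _ (this j)).2
    · exact (ind _ _ (this j)).1
  let BB : Module.Basis (Fin (n + 1) ⊕ Fin (n + 1)) k (Fin (2 * n + 2) → k) :=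
    basisOfLinearIndependentOfCardEqFinrank hli (by simp; ring)
  have hBB : ∀ s, BB s = Sum.elim a b s := fun s => by simp [BB]
  have hlin : ∀ s (v : Fin (2 * n + 2) → k), BB.repr v s = ∑ i, BB.repr (Pi.single i 1) s * v i := by
    intro s v
    conv_lhs => rw [← (Pi.basisFun k (Fin (2 * n + 2))).sum_repr v]
    simp [map_sum, mul_comm]
  have hdual : ∀ s s', ∑ i, BB.repr (Pi.single i 1) s * BB s' i = if s = s' then 1 else 0 := by
    intro s s'
    rw [← hlin, BB.repr_self, Finsupp.single_apply]
    simp [eq_comm]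
  refine ⟨a, b, fun j i => BB.repr (Pi.single i 1) (Sum.inl j),
    fun j i => BB.repr (Pi.single i 1) (Sum.inr j), hH1, hH2, ?_, ?_, ?_, ?_, ?_, ?_⟩
  · have inj : ∀ x y : k, ∀ x' y' : k, algebraMap k K x + δ * algebraMap k K y =
        algebraMap k K x' + δ * algebraMap k K y' → x = x' ∧ y = y' := by
      intro x y x' y' h
      have := ind (x - x') (y - y') (by simp only [map_sub]; linear_combination h)
      exact ⟨sub_eq_zero.mp this.1, sub_eq_zero.mp this.2⟩
    have h1 := inj (a 0 0) (b 0 0) 1 0 (by rw [← hab, he_zero]; simp)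
    refine ⟨h1.1, h1.2, fun j => inj _ _ 0 0 ?_⟩
    rw [← hab, he_succ]; simp
  · intro i i'
    have := congrFun (BB.sum_repr (Pi.single i' 1)) i
    rw [Fintype.sum_sum_type] at this
    simp only [Finset.sum_apply, Pi.add_apply, Pi.smul_apply, smul_eq_mul, hBB, Sum.elim_inl, Sum.elim_inr] at this
    rw [Finset.sum_add_distrib, this, Pi.single_apply]
  · intro j j'
    have := hdual (Sum.inl j) (Sum.inl j')
    simpa [hBB] using this
  · intro j j'
    have := hdual (Sum.inl j) (Sum.inr j')
    simpa [hBB] using this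
  · intro j j'
    have := hdual (Sum.inr j) (Sum.inl j')
    simpa [hBB] using this
  · intro j j'
    have := hdual (Sum.inr j) (Sum.inr j')
    simpa [hBB] using this


/-! ### Pencils of lines meeting both planes -/

theorem pencil_degree {k R ι : Type*} [Field k] [CommRing R] [Algebra k R]
    {F : MvPolynomial ι k} {m : ℕ} (hF : F.IsHomogeneous m) (y1 y2 : ι → R) :
    (aeval (fun i => Polynomial.C (y1 i) + Polynomial.X * Polynomial.C (y2 i)) F :
      Polynomial R).natDegree ≤ m ∧
    (aeval (fun i => Polynomial.C (y1 i) + Polynomial.X * Polynomial.C (y2 i)) F :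
      Polynomial R).coeff m = aeval y2 F := by
  have hlin : ∀ i, (Polynomial.C (y1 i) + Polynomial.X * Polynomial.C (y2 i)).natDegree ≤ 1 := by
    intro i
    rw [add_comm, mul_comm]
    exact Polynomial.natDegree_linear_le
  have hc1 : ∀ i, (Polynomial.C (y1 i) + Polynomial.X * Polynomial.C (y2 i)).coeff 1 = y2 i := by
    intro i
    simp [Polynomial.coeff_C]
  -- monomials
  have hmon : ∀ (e : ι →₀ ℕ) (s : Finset ι),
      (∏ i ∈ s, (Polynomial.C (y1 i) + Polynomial.X * Polynomial.C (y2 i)) ^ e i).natDegree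
        ≤ ∑ i ∈ s, e i ∧
      (∏ i ∈ s, (Polynomial.C (y1 i) + Polynomial.X * Polynomial.C (y2 i)) ^ e i).coeff
        (∑ i ∈ s, e i) = ∏ i ∈ s, y2 i ^ e i := by
    classical
    intro e s
    induction s using Finset.induction_on with
    | empty => simp
    | insert a s ha ih =>
      rw [Finset.prod_insert ha, Finset.sum_insert ha, Finset.prod_insert ha]
      have h1 : ((Polynomial.C (y1 a) + Polynomial.X * Polynomial.C (y2 a)) ^ e a).natDegree ≤ e a := by
        have := Polynomial.natDegree_pow_le_of_le (e a) (hlin a)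
        simpa using this
      have h2 : ((Polynomial.C (y1 a) + Polynomial.X * Polynomial.C (y2 a)) ^ e a).coeff (e a) =
          y2 a ^ e a := by
        have := Polynomial.coeff_pow_of_natDegree_le (m := e a) (hlin a)
        rw [hc1, mul_one] at this
        exact this
      refine ⟨Polynomial.natDegree_mul_le.trans (add_le_add h1 ih.1), ?_⟩
      rw [Polynomial.coeff_mul_add_eq_of_natDegree_le h1 ih.1, h2, ih.2]
  rw [aeval_def, eval₂_eq, aeval_def, eval₂_eq]
  constructor
  · refine Polynomial.natDegree_sum_le_of_forall_le _ _ fun e he => ?_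
    have := (hmon e e.support).1
    rw [← hF.degree_eq_sum_deg_support he] at this
    refine (Polynomial.natDegree_C_mul_le _ _).trans this
  · rw [Polynomial.finsetSum_coeff]
    refine Finset.sum_congr rfl fun e he => ?_
    have := (hmon e e.support).2
    rw [← hF.degree_eq_sum_deg_support he] at this
    rw [← this]
    exact Polynomial.coeff_C_mul _

theorem cubic_pencil {k R R' ι : Type} [Field k] [CommRing R] [Algebra k R] [CommRing R']
    [IsDomain R'] [Algebra k R'] (j : R →ₐ[k] R') (hj : Function.Injective j)
    (d : k) (δ : R') (hδ : δ * δ = algebraMap k R' d) (h2 : 2 * δ ≠ 0)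
    {F : MvPolynomial ι k} (hF : F.IsHomogeneous 3) (y1 y2 : ι → R)
    (hp : aeval (fun i => j (y1 i) + δ * j (y2 i)) F = 0)
    (hm : aeval (fun i => j (y1 i) - δ * j (y2 i)) F = 0) :
    ∃ g : R, ∀ (A : Type) [CommRing A] [Algebra k A] (f : R →ₐ[k] A) (s : A),
      aeval (fun i => f (y1 i) + s * f (y2 i)) F =
        (s ^ 2 - algebraMap k A d) * (f (aeval y2 F) * s + f g) := by
  obtain ⟨hdeg, hc3⟩ := pencil_degree hF y1 y2
  set P : Polynomial R :=
    aeval (fun i => Polynomial.C (y1 i) + Polynomial.X * Polynomial.C (y2 i)) F with hP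
  have hev : ∀ (A : Type) [CommRing A] [Algebra k A] (f : R →ₐ[k] A) (s : A),
      aeval (fun i => f (y1 i) + s * f (y2 i)) F =
        f (P.coeff 0) + f (P.coeff 1) * s + f (P.coeff 2) * s ^ 2 + f (P.coeff 3) * s ^ 3 := by
    intro A _ _ f s
    have h1 : aeval (fun i => f (y1 i) + s * f (y2 i)) F = P.eval₂ (f : R →+* A) s := by
      let ψ : Polynomial R →ₐ[k] A :=
        { Polynomial.eval₂RingHom (f : R →+* A) s with
          commutes' := fun c => by
            change Polynomial.eval₂ (f : R →+* A) s (algebraMap k (Polynomial R) c) = _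
            rw [IsScalarTower.algebraMap_apply k R (Polynomial R), Polynomial.algebraMap_eq,
              Polynomial.eval₂_C]
            exact f.commutes c }
      have h2 : ∀ p, ψ p = p.eval₂ (f : R →+* A) s := fun p => rfl
      rw [← h2, hP, ← AlgHom.comp_apply, comp_aeval]
      congr 2
      funext i
      simp [h2, Polynomial.eval₂_add, Polynomial.eval₂_mul]
      ring
    rw [h1, Polynomial.eval₂_eq_sum_range' _ (Nat.lt_succ_of_le hdeg)]
    simp [Finset.sum_range_succ]
  have e1 := hev R' j δ
  have e2 := hev R' j (-δ)
  rw [hp] at e1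
  simp only [neg_mul, ← sub_eq_add_neg] at e2
  rw [hm] at e2
  have h20 : (2 : R') ≠ 0 := left_ne_zero_of_mul h2
  have c0 : P.coeff 0 = - (algebraMap k R d * P.coeff 2) := by
    apply hj
    rw [map_neg, map_mul, AlgHom.commutes, ← hδ]
    apply mul_left_cancel₀ h20
    linear_combination -e1 - e2
  have c1 : P.coeff 1 = - (algebraMap k R d * P.coeff 3) := by
    apply hj
    rw [map_neg, map_mul, AlgHom.commutes, ← hδ]
    apply mul_left_cancel₀ h2
    linear_combination -e1 + e2
  refine ⟨P.coeff 2, fun A _ _ f s => ?_⟩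
  rw [hev, c0, c1, ← hc3, map_neg, map_mul, map_neg, map_mul, AlgHom.commutes]
  ring

/-! ### Birational maps -/

theorem birational_core {k S E L ι : Type} [Field k] [CommRing S] [IsDomain S] [Algebra k S]
    [Field E] [Algebra S E] [IsFractionRing S E] [Algebra k E] [IsScalarTower k S E]
    [Field L] [Algebra (MvPolynomial ι k) L] [IsFractionRing (MvPolynomial ι k) L]
    [Algebra k L] [IsScalarTower k (MvPolynomial ι k) L]
    (φ : S →ₐ[k] L) (D : S) (hD : φ D ≠ 0) (Nn : ι → S)
    (hN : ∀ i, φ (Nn i) = φ D * algebraMap (MvPolynomial ι k) L (X i))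
    (hgen : Function.Injective (aeval (fun i => algebraMap S E (Nn i) / algebraMap S E D) :
        MvPolynomial ι k →ₐ[k] E) → ∀ M : IntermediateField k E,
        (∀ i, algebraMap S E (Nn i) / algebraMap S E D ∈ M) → ∀ s : S, algebraMap S E s ∈ M) :
    Nonempty (E ≃ₐ[k] L) := by
  set θ : MvPolynomial ι k →ₐ[k] E :=
    aeval (fun i => algebraMap S E (Nn i) / algebraMap S E D) with hθ
  have hD0 : D ≠ 0 := by rintro rfl; simp at hD
  have hinjS : Function.Injective (algebraMap S E) := IsFractionRing.injective S E
  have hDE : algebraMap S E D ≠ 0 := by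
    intro h; exact hD0 (hinjS (by rw [h, map_zero]))
  have hclear : ∀ h : MvPolynomial ι k, ∃ (m : ℕ) (t : S),
      algebraMap S E t = algebraMap S E D ^ m * θ h ∧
      φ t = φ D ^ m * algebraMap (MvPolynomial ι k) L h := by
    intro h
    induction h using MvPolynomial.induction_on with
    | C c =>
      refine ⟨0, algebraMap k S c, ?_, ?_⟩
      · rw [← IsScalarTower.algebraMap_apply]; simp [← algebraMap_eq]
      · rw [AlgHom.commutes, ← algebraMap_eq, ← IsScalarTower.algebraMap_apply]; simp
    | add p q hp hq =>
      obtain ⟨m, t, h1, h2⟩ := hp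
      obtain ⟨m', t', h1', h2'⟩ := hq
      refine ⟨m + m', t * D ^ m' + t' * D ^ m, ?_, ?_⟩
      · simp only [map_add, map_mul, map_pow, h1, h1']; ring
      · simp only [map_add, map_mul, map_pow, h2, h2']; ring
    | mul_X p i hp =>
      obtain ⟨m, t, h1, h2⟩ := hp
      refine ⟨m + 1, t * Nn i, ?_, ?_⟩
      · simp only [map_mul, h1]
        rw [show θ (X i) = algebraMap S E (Nn i) / algebraMap S E D by simp [hθ]]
        rw [pow_succ]
        field_simp
      · simp only [map_mul, h2, hN]; ring
  have hinj : Function.Injective θ := by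
    rw [injective_iff_map_eq_zero]
    intro h hh
    obtain ⟨m, t, h1, h2⟩ := hclear h
    rw [hh, mul_zero] at h1
    have ht : t = 0 := hinjS (by rw [h1, map_zero])
    rw [ht, map_zero] at h2
    have := (mul_eq_zero.mp h2.symm).resolve_left (pow_ne_zero _ hD)
    exact IsFractionRing.injective (MvPolynomial ι k) L (by rw [this, map_zero])
  let Θ : L →ₐ[k] E := IsFractionRing.liftAlgHom (K := L) hinj
  have hΘ : ∀ h, Θ (algebraMap (MvPolynomial ι k) L h) = θ h := by
    intro h
    exact IsFractionRing.lift_algebraMap (K := L) (g := (θ : MvPolynomial ι k →+* E)) hinj h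
  have hM : ∀ s : S, algebraMap S E s ∈ Θ.fieldRange := by
    refine hgen hinj Θ.fieldRange fun i => ⟨algebraMap (MvPolynomial ι k) L (X i), ?_⟩
    exact (hΘ _).trans (by simp [hθ])
  have hsurj : Function.Surjective Θ := by
    intro y
    obtain ⟨s, t, -, rfl⟩ := IsFractionRing.div_surjective (A := S) y
    exact Θ.fieldRange.div_mem (hM s) (hM t)
  exact ⟨(AlgEquiv.ofBijective Θ ⟨Θ.toRingHom.injective, hsurj⟩).symm⟩

/-! ### Linear coordinates -/

section coords

variable {k : Type} [Field k] {n N : ℕ}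

/-- linear combination of the vectors `a j`, `b j`, with coefficients in an algebra -/
def lc (a b : Fin (n + 1) → Fin N → k) {A : Type} [CommRing A] [Algebra k A]
    (c c' : Fin (n + 1) → A) (i : Fin N) : A :=
  ∑ j, (c j * algebraMap k A (a j i) + c' j * algebraMap k A (b j i))

/-- linear forms applied to a vector with entries in an algebra -/
def co (U : Fin (n + 1) → Fin N → k) {A : Type} [CommRing A] [Algebra k A]
    (x : Fin N → A) (j : Fin (n + 1)) : A :=
  ∑ i, algebraMap k A (U j i) * x i

variable {a b U V : Fin (n + 1) → Fin N → k} {A : Type} [CommRing A] [Algebra k A]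

theorem map_lc {B : Type} [CommRing B] [Algebra k B] (f : A →ₐ[k] B) (c c' : Fin (n + 1) → A)
    (i : Fin N) : f (lc a b c c' i) = lc a b (fun j => f (c j)) (fun j => f (c' j)) i := by
  simp [lc]

theorem map_co {B : Type} [CommRing B] [Algebra k B] (f : A →ₐ[k] B) (x : Fin N → A)
    (j : Fin (n + 1)) : f (co U x j) = co U (fun i => f (x i)) j := by
  simp [co]

theorem lc_co (h : ∀ i i', ∑ j, (U j i' * a j i + V j i' * b j i) = if i = i' then 1 else 0)
    (x : Fin N → A) (i : Fin N) : lc a b (co U x) (co V x) i = x i := by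
  have h1 : ∀ i', ∑ j, (algebraMap k A (U j i') * algebraMap k A (a j i) +
      algebraMap k A (V j i') * algebraMap k A (b j i)) = if i = i' then 1 else 0 := by
    intro i'
    have := congrArg (algebraMap k A) (h i i')
    rw [apply_ite (algebraMap k A)] at this
    simpa using this
  have h2 : x i = ∑ i', (if i = i' then 1 else 0) * x i' := by simp
  rw [h2]
  simp only [← h1, lc, co, Finset.sum_mul]
  rw [Finset.sum_comm]
  refine Finset.sum_congr rfl fun j _ => ?_
  rw [← Finset.sum_add_distrib]
  refine Finset.sum_congr rfl fun i' _ => ?_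
  ring

theorem co_lc (W : Fin (n + 1) → Fin N → k) (c c' : Fin (n + 1) → A) (j : Fin (n + 1)) :
    co W (lc a b c c') j = ∑ j', (c j' * algebraMap k A (∑ i, W j i * a j' i) +
      c' j' * algebraMap k A (∑ i, W j i * b j' i)) := by
  simp only [lc, co, Finset.mul_sum, map_sum]
  rw [Finset.sum_comm]
  refine Finset.sum_congr rfl fun j' _ => ?_
  rw [← Finset.sum_add_distrib]
  refine Finset.sum_congr rfl fun i' _ => ?_
  simp only [map_mul]
  ring

theorem coU_lc (h1 : ∀ j j', ∑ i, U j i * a j' i = if j = j' then 1 else 0)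
    (h2 : ∀ j j', ∑ i, U j i * b j' i = 0) (c c' : Fin (n + 1) → A) (j : Fin (n + 1)) :
    co U (lc a b c c') j = c j := by
  rw [co_lc]
  simp [h1, h2, apply_ite (algebraMap k A)]

theorem coV_lc (h1 : ∀ j j', ∑ i, V j i * a j' i = 0)
    (h2 : ∀ j j', ∑ i, V j i * b j' i = if j = j' then 1 else 0)
    (c c' : Fin (n + 1) → A) (j : Fin (n + 1)) :
    co V (lc a b c c') j = c' j := by
  rw [co_lc]
  simp [h1, h2, apply_ite (algebraMap k A)]

end coords

theorem lc_zero {k : Type} [Field k] {n N : ℕ} {a b : Fin (n + 1) → Fin (N + 1) → k}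
    {A : Type} [CommRing A] [Algebra k A]
    (h : a 0 0 = 1 ∧ b 0 0 = 0 ∧ ∀ j : Fin n, a j.succ 0 = 0 ∧ b j.succ 0 = 0)
    (c c' : Fin (n + 1) → A) : lc a b c c' 0 = c 0 := by
  simp [lc, Fin.sum_univ_succ, h.1, h.2.1, fun j => (h.2.2 j).1, fun j => (h.2.2 j).2]

theorem not_square {k L ι : Type} [Field k] [Infinite k] [Field L] [Algebra (MvPolynomial ι k) L]
    [IsFractionRing (MvPolynomial ι k) L] [Algebra k L] [IsScalarTower k (MvPolynomial ι k) L]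
    (d : k) (hd : ∀ t : k, t * t ≠ d) (s : L) : s ^ 2 - algebraMap k L d ≠ 0 := by
  intro h
  obtain ⟨p, q, hq, rfl⟩ := IsFractionRing.div_surjective (A := MvPolynomial ι k) s
  have hq0 : q ≠ 0 := nonZeroDivisors.ne_zero hq
  have hqL : algebraMap (MvPolynomial ι k) L q ≠ 0 := by
    intro h0
    exact hq0 (IsFractionRing.injective (MvPolynomial ι k) L (by rw [h0, map_zero]))
  have h1 : p * p = C d * (q * q) := by
    apply IsFractionRing.injective (MvPolynomial ι k) L
    rw [map_mul, map_mul, map_mul, ← algebraMap_eq, ← IsScalarTower.algebraMap_apply]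
    field_simp at h
    linear_combination h
  obtain ⟨v, hv⟩ : ∃ v, eval v q ≠ 0 := by
    by_contra hcon
    push Not at hcon
    exact hq0 (MvPolynomial.funext fun v => by rw [hcon v, map_zero])
  have h2 := congrArg (eval v) h1
  simp only [map_mul, eval_C] at h2
  apply hd (eval v p / eval v q)
  field_simp
  linear_combination h2


/-! ### The generic pencil -/

section generic

variable {k : Type} [Field k] {n : ℕ} {ι : Type}

/-- generic coordinates `(1, p₁, …, pₙ)` -/
noncomputable def genP (k : Type) [Field k] (e : Fin n ⊕ Fin n ≃ ι) :
    Fin (n + 1) → MvPolynomial ι k :=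
  Fin.cons 1 (fun j => X (e (Sum.inl j)))

/-- generic coordinates `(0, q₁, …, qₙ)` -/
noncomputable def genQ (k : Type) [Field k] (e : Fin n ⊕ Fin n ≃ ι) :
    Fin (n + 1) → MvPolynomial ι k :=
  Fin.cons 0 (fun j => X (e (Sum.inr j)))

theorem lead_ne_zero [Infinite k] (N : ℕ) (a b U V : Fin (n + 1) → Fin (N + 1) → k)
    (h00 : a 0 0 = 1 ∧ b 0 0 = 0 ∧ ∀ j : Fin n, a j.succ 0 = 0 ∧ b j.succ 0 = 0)
    (hUV : ∀ i i', ∑ j, (U j i' * a j i + V j i' * b j i) = if i = i' then 1 else 0)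
    (hVb : ∀ j j', ∑ i, V j i * b j' i = if j = j' then 1 else 0)
    (F : MvPolynomial (Fin (N + 1)) k) (hF : F.IsHomogeneous 3)
    (hno : ∀ L Q : MvPolynomial (Fin (N + 1)) k, L.IsHomogeneous 1 → Q.IsHomogeneous 2 → F ≠ L * Q)
    (e : Fin n ⊕ Fin n ≃ ι) :
    aeval (lc a b (genQ k e) (genP k e)) F ≠ 0 := by
  intro h0
  suffices h : aeval (Fin.cons 0 X : Fin (N + 1) → MvPolynomial (Fin N) k) F = 0 by
    obtain ⟨Q, hQ, hFQ⟩ := zero_hyperplane_factor k N F hF h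
    exact hno _ _ (isHomogeneous_X _ _) hQ hFQ
  have hl : co V (Fin.cons 0 X : Fin (N + 1) → MvPolynomial (Fin N) k) 0 ≠ 0 := by
    intro hl
    have h1 := congrArg (aeval (fun i => b 0 (Fin.succ i)) : MvPolynomial (Fin N) k →ₐ[k] k) hl
    rw [map_co, map_zero] at h1
    have h2 : (fun i => (aeval (fun i => b 0 (Fin.succ i)) : MvPolynomial (Fin N) k →ₐ[k] k)
        ((Fin.cons 0 X : Fin (N + 1) → MvPolynomial (Fin N) k) i)) = b 0 := by
      funext i
      refine Fin.cases ?_ (fun j => ?_) i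
      · simp [h00.2.1]
      · simp
    rw [h2] at h1
    have h3 := hVb 0 0
    simp only [co, Algebra.algebraMap_self, RingHom.id_apply] at h1
    rw [h1] at h3
    simp at h3
  refine (mul_eq_zero.mp (?_ : co V (Fin.cons 0 X : Fin (N + 1) → MvPolynomial (Fin N) k) 0 *
    aeval (Fin.cons 0 X : Fin (N + 1) → MvPolynomial (Fin N) k) F = 0)).resolve_left hl
  refine MvPolynomial.funext fun w => ?_
  change eval w _ = eval w _
  rw [map_mul, map_zero]
  set v : Fin (N + 1) → k := Fin.cons 0 w with hv
  have hvw : (fun i => (aeval w : MvPolynomial (Fin N) k →ₐ[k] k)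
      ((Fin.cons 0 X : Fin (N + 1) → MvPolynomial (Fin N) k) i)) = v := by
    funext i
    refine Fin.cases ?_ (fun j => ?_) i
    · simp [hv]
    · simp [hv]
  have e1 : eval w (co V (Fin.cons 0 X : Fin (N + 1) → MvPolynomial (Fin N) k) 0) = co V v 0 := by
    have := map_co (U := V) (aeval w : MvPolynomial (Fin N) k →ₐ[k] k)
      (Fin.cons 0 X : Fin (N + 1) → MvPolynomial (Fin N) k) 0
    rw [hvw] at this
    exact this
  have e2 : eval w (aeval (Fin.cons 0 X : Fin (N + 1) → MvPolynomial (Fin N) k) F) = aeval v F := by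
    have : (aeval w : MvPolynomial (Fin N) k →ₐ[k] k)
        (aeval (Fin.cons 0 X : Fin (N + 1) → MvPolynomial (Fin N) k) F) = aeval v F := by
      rw [← AlgHom.comp_apply, comp_aeval, hvw]
    exact this
  rw [e1, e2]
  by_cases hc : co V v 0 = 0
  · rw [hc, zero_mul]
  · set r := co V v 0 with hr
    have hU0 : co U v 0 = 0 := by
      rw [← lc_zero h00 (co U v) (co V v), lc_co hUV]
      simp [hv]
    let f : MvPolynomial ι k →ₐ[k] k :=
      aeval (fun i => Sum.elim (fun j : Fin n => r⁻¹ * co V v j.succ)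
        (fun j : Fin n => r⁻¹ * co U v j.succ) (e.symm i))
    have hP : ∀ j, f (genP k e j) = r⁻¹ * co V v j := by
      intro j
      refine Fin.cases ?_ (fun j => ?_) j
      · simp [genP, ← hr, hc]
      · simp [genP, f]
    have hQ : ∀ j, f (genQ k e j) = r⁻¹ * co U v j := by
      intro j
      refine Fin.cases ?_ (fun j => ?_) j
      · simp [genQ, hU0]
      · simp [genQ, f]
    have h1 := congrArg f h0
    rw [← AlgHom.comp_apply, comp_aeval, map_zero] at h1
    have h2 : (fun i => f (lc a b (genQ k e) (genP k e) i)) = fun i => r⁻¹ * v i := by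
      funext i
      rw [map_lc]
      simp only [hP, hQ]
      rw [← lc_co hUV v i]
      simp only [lc, Finset.mul_sum]
      refine Finset.sum_congr rfl fun j _ => ?_
      ring
    rw [h2, homog_aeval_smul hF] at h1
    rw [(mul_eq_zero.mp h1).resolve_left (pow_ne_zero _ (inv_ne_zero hc)), mul_zero]

theorem generic_equiv [Infinite k] (N : ℕ) (a b U V : Fin (n + 1) → Fin (N + 1) → k)
    (h00 : a 0 0 = 1 ∧ b 0 0 = 0 ∧ ∀ j : Fin n, a j.succ 0 = 0 ∧ b j.succ 0 = 0)
    (hUV : ∀ i i', ∑ j, (U j i' * a j i + V j i' * b j i) = if i = i' then 1 else 0)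
    (hUa : ∀ j j', ∑ i, U j i * a j' i = if j = j' then 1 else 0)
    (hUb : ∀ j j', ∑ i, U j i * b j' i = 0)
    (hVa : ∀ j j', ∑ i, V j i * a j' i = 0)
    (hVb : ∀ j j', ∑ i, V j i * b j' i = if j = j' then 1 else 0)
    (F : MvPolynomial (Fin (N + 1)) k)
    (e : Fin n ⊕ Fin n ≃ ι) (d : k) (hd : ∀ t : k, t * t ≠ d)
    (g3 g2 : MvPolynomial ι k) (hg3 : g3 ≠ 0)
    (hpencil : ∀ (A : Type) [CommRing A] [Algebra k A] (f : MvPolynomial ι k →ₐ[k] A) (s : A),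
      aeval (fun i => f (lc a b (genP k e) (fun j => C d * genQ k e j) i) +
        s * f (lc a b (genQ k e) (genP k e) i)) F =
        (s ^ 2 - algebraMap k A d) * (f g3 * s + f g2))
    {S E L : Type} [CommRing S] [IsDomain S] [Algebra k S]
    [Field E] [Algebra S E] [IsFractionRing S E] [Algebra k E] [IsScalarTower k S E]
    [Field L] [Algebra (MvPolynomial ι k) L] [IsFractionRing (MvPolynomial ι k) L]
    [Algebra k L] [IsScalarTower k (MvPolynomial ι k) L]
    (x : Fin (N + 1) → S) (hx0 : x 0 = 1) (hxF : aeval x F = 0)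
    (huniv : ∀ v : Fin (N + 1) → L, v 0 = 1 → aeval v F = 0 →
      ∃ φ : S →ₐ[k] L, ∀ i, φ (x i) = v i)
    (hgen : Algebra.adjoin k (Set.range x) = ⊤) :
    Nonempty (E ≃ₐ[k] L) := by
  -- a combined form of the pencil identity
  have hpen : ∀ (A : Type) [CommRing A] [Algebra k A] (f : MvPolynomial ι k →ₐ[k] A) (s : A),
      aeval (lc a b (fun j => f (genP k e j) + s * f (genQ k e j))
        (fun j => algebraMap k A d * f (genQ k e j) + s * f (genP k e j))) F =
        (s ^ 2 - algebraMap k A d) * (f g3 * s + f g2) := by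
    intro A _ _ f s
    rw [← hpencil A f s]
    congr 2
    funext i
    rw [map_lc, map_lc]
    simp only [lc, Finset.mul_sum]
    rw [← Finset.sum_add_distrib]
    refine Finset.sum_congr rfl fun j _ => ?_
    rw [map_mul, ← algebraMap_eq, AlgHom.commutes]
    ring
  let al : MvPolynomial ι k →ₐ[k] L := IsScalarTower.toAlgHom k (MvPolynomial ι k) L
  have hal : ∀ p, al p = algebraMap (MvPolynomial ι k) L p := fun p => rfl
  have hg3L : al g3 ≠ 0 := by
    intro h0
    exact hg3 (IsFractionRing.injective (MvPolynomial ι k) L (by rw [← hal, h0, map_zero]))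
  have genP0 : genP k e 0 = 1 := rfl
  have genQ0 : genQ k e 0 = 0 := rfl
  have genPs : ∀ j : Fin n, genP k e j.succ = X (e (Sum.inl j)) := fun j => rfl
  have genQs : ∀ j : Fin n, genQ k e j.succ = X (e (Sum.inr j)) := fun j => rfl
  set s : L := - al g2 / al g3 with hs
  set vU : Fin (n + 1) → L := fun j => al (genP k e j) + s * al (genQ k e j) with hvU
  set vV : Fin (n + 1) → L :=
    fun j => algebraMap k L d * al (genQ k e j) + s * al (genP k e j) with hvV
  obtain ⟨φ, hφ⟩ := huniv (lc a b vU vV) (by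
      rw [lc_zero h00]; simp [hvU, genP0, genQ0]) (by
      rw [hvU, hvV, hpen L al s]
      have : al g3 * s + al g2 = 0 := by rw [hs]; field_simp; ring
      rw [this, mul_zero])
  have hφx : (fun i => φ (x i)) = lc a b vU vV := funext hφ
  have hφU : ∀ j, φ (co U x j) = vU j := fun j => by
    rw [map_co, hφx, coU_lc hUa hUb]
  have hφV : ∀ j, φ (co V x j) = vV j := fun j => by
    rw [map_co, hφx, coV_lc hVa hVb]
  have hV0 : vV 0 = s := by simp [hvV, genP0, genQ0]
  let D : S := algebraMap k S d - co V x 0 ^ 2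
  have hφD : φ D = algebraMap k L d - s ^ 2 := by
    simp only [D, map_sub, map_pow, hφV, hV0, AlgHom.commutes]
  let Nn : ι → S := fun i => Sum.elim
    (fun j : Fin n => algebraMap k S d * co U x j.succ - co V x 0 * co V x j.succ)
    (fun j : Fin n => co V x j.succ - co V x 0 * co U x j.succ) (e.symm i)
  have hNl : ∀ j, Nn (e (Sum.inl j)) =
      algebraMap k S d * co U x j.succ - co V x 0 * co V x j.succ := fun j => by simp [Nn]
  have hNr : ∀ j, Nn (e (Sum.inr j)) =
      co V x j.succ - co V x 0 * co U x j.succ := fun j => by simp [Nn]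
  refine birational_core (ι := ι) φ D ?_ Nn ?_ ?_
  · rw [hφD, ← neg_sub]
    exact neg_ne_zero.mpr (not_square (ι := ι) d hd s)
  · intro i
    obtain ⟨i, rfl⟩ := e.surjective i
    rw [hφD, ← hal]
    rcases i with j | j
    · rw [hNl, ← genPs]
      simp only [map_sub, map_mul, hφU, hφV, AlgHom.commutes, hvU, hvV, genP0, genQ0,
        map_one, map_zero]
      ring
    · rw [hNr, ← genQs]
      simp only [map_sub, map_mul, hφU, hφV, hvU, hvV, genP0, genQ0, map_one, map_zero]
      ring
  · intro hinj M hM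
    set θ : MvPolynomial ι k →ₐ[k] E :=
      aeval (fun i => algebraMap S E (Nn i) / algebraMap S E D) with hθ
    have hθM : ∀ p, θ p ∈ M := by
      intro p
      induction p using MvPolynomial.induction_on with
      | C c => rw [← algebraMap_eq, AlgHom.commutes]; exact M.algebraMap_mem c
      | add p q hp hq => rw [map_add]; exact M.add_mem hp hq
      | mul_X p i hp =>
        rw [map_mul]
        refine M.mul_mem hp ?_
        rw [hθ, aeval_X]
        exact hM i
    have hD0 : D ≠ 0 := by
      intro h0
      have : φ D ≠ 0 := by
        rw [hφD, ← neg_sub]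
        exact neg_ne_zero.mpr (not_square (ι := ι) d hd s)
      exact this (by rw [h0, map_zero])
    have hDE : algebraMap S E D ≠ 0 := by
      intro h0
      exact hD0 (IsFractionRing.injective S E (by rw [h0, map_zero]))
    let aE : S →ₐ[k] E := IsScalarTower.toAlgHom k S E
    have haE : ∀ p, aE p = algebraMap S E p := fun p => rfl
    set u : Fin (n + 1) → E := fun j => aE (co U x j) with hu
    set w : Fin (n + 1) → E := fun j => aE (co V x j) with hw
    have hU0 : co U x 0 = 1 := by
      have h := lc_co hUV x 0
      rw [lc_zero h00, hx0] at h
      exact h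
    have hu0 : u 0 = 1 := by rw [hu]; simp only [hU0, map_one]
    have hDE' : algebraMap S E D = algebraMap k E d - w 0 ^ 2 := by
      rw [← haE]
      simp only [D, map_sub, map_pow, AlgHom.commutes, hw]
    rw [hDE'] at hDE
    have hP : ∀ j, θ (genP k e j) * (algebraMap k E d - w 0 ^ 2) =
        algebraMap k E d * u j - w 0 * w j := by
      intro j
      refine Fin.cases ?_ (fun j => ?_) j
      · rw [genP0, map_one, hu0]; ring
      · rw [genPs, hθ, aeval_X, hNl, hDE', div_mul_cancel₀ _ hDE, ← haE]
        simp only [map_sub, map_mul, AlgHom.commutes, hu, hw]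
    have hQ : ∀ j, θ (genQ k e j) * (algebraMap k E d - w 0 ^ 2) =
        w j - w 0 * u j := by
      intro j
      refine Fin.cases ?_ (fun j => ?_) j
      · rw [genQ0, map_zero, hu0]; ring
      · rw [genQs, hθ, aeval_X, hNr, hDE', div_mul_cancel₀ _ hDE, ← haE]
        simp only [map_sub, map_mul, hu, hw]
    have hu' : u = fun j => θ (genP k e j) + w 0 * θ (genQ k e j) := by
      funext j
      apply mul_right_cancel₀ hDE
      linear_combination - hP j - w 0 * hQ j
    have hw' : w = fun j => algebraMap k E d * θ (genQ k e j) + w 0 * θ (genP k e j) := by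
      funext j
      apply mul_right_cancel₀ hDE
      linear_combination - w 0 * hP j - algebraMap k E d * hQ j
    have hxE : ∀ i, aE (x i) = lc a b u w i := by
      intro i
      conv_lhs => rw [← lc_co hUV x i]
      rw [map_lc]
    have hz : aeval (lc a b u w) F = 0 := by
      have := congrArg aE hxF
      rw [← AlgHom.comp_apply, comp_aeval, map_zero] at this
      rw [← this]
      congr 2
      funext i
      exact (hxE i).symm
    have hz' := hpen E θ (w 0)
    rw [← hu', ← hw', hz] at hz'
    have hlin : θ g3 * w 0 + θ g2 = 0 := by
      refine (mul_eq_zero.mp hz'.symm).resolve_left ?_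
      rw [← neg_sub]
      exact neg_ne_zero.mpr hDE
    have hg3E : θ g3 ≠ 0 := by
      intro h0
      exact hg3 (hinj (by rw [h0, map_zero]))
    have hw0 : w 0 ∈ M := by
      have : w 0 = - θ g2 / θ g3 := by
        field_simp
        linear_combination hlin
      rw [this]
      exact M.div_mem (M.neg_mem (hθM _)) (hθM _)
    have hxM : ∀ i, aE (x i) ∈ M := by
      intro i
      rw [hxE]
      refine M.sum_mem fun j _ => M.add_mem (M.mul_mem ?_ (M.algebraMap_mem _))
        (M.mul_mem ?_ (M.algebraMap_mem _))
      · rw [hu']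
        exact M.add_mem (hθM _) (M.mul_mem hw0 (hθM _))
      · rw [hw']
        exact M.add_mem (M.mul_mem (M.algebraMap_mem _) (hθM _)) (M.mul_mem hw0 (hθM _))
    have hle : Algebra.adjoin k (Set.range x) ≤ M.toSubalgebra.comap aE := by
      rw [Algebra.adjoin_le_iff]
      rintro _ ⟨i, rfl⟩
      exact hxM i
    intro t
    have : t ∈ Algebra.adjoin k (Set.range x) := by rw [hgen]; trivial
    exact hle this

end generic

theorem pencil_vanish (k K : Type) [Field k] [Field K] [Infinite K] [Algebra k K]
    {n N : ℕ} {ι : Type} (a b : Fin (n + 1) → Fin (N + 1) → k)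
    (F : MvPolynomial (Fin (N + 1)) k) (e : Fin n ⊕ Fin n ≃ ι) (d : k) (ε : K)
    (hε : ε * ε = algebraMap k K d) (H : Submodule K (Fin (N + 1) → K))
    (hH : ∀ j, (fun i => algebraMap k K (a j i) + ε * algebraMap k K (b j i)) ∈ H)
    (hX : ∀ x ∈ H, aeval x F = 0) :
    aeval (fun i => mapAlgHom (Algebra.ofId k K)
        (lc a b (genP k e) (fun j => C d * genQ k e j) i) +
      C ε * mapAlgHom (Algebra.ofId k K) (lc a b (genQ k e) (genP k e) i)) F
      = (0 : MvPolynomial ι K) := by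
  refine MvPolynomial.funext fun w => ?_
  rw [map_zero]
  let ev : MvPolynomial ι K →ₐ[k] K := (aeval w : MvPolynomial ι K →ₐ[K] K).restrictScalars k
  change ev _ = 0
  rw [← AlgHom.comp_apply, comp_aeval]
  apply hX
  let f : MvPolynomial ι k →ₐ[k] K := ev.comp (mapAlgHom (Algebra.ofId k K))
  have hf : (fun i => ev (mapAlgHom (Algebra.ofId k K)
        (lc a b (genP k e) (fun j => C d * genQ k e j) i) +
      C ε * mapAlgHom (Algebra.ofId k K) (lc a b (genQ k e) (genP k e) i))) =
      ∑ j, (f (genP k e j) + ε * f (genQ k e j)) •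
        (fun i => algebraMap k K (a j i) + ε * algebraMap k K (b j i)) := by
    funext i
    have h1 : ev (C ε) = ε := by simp [ev]
    rw [map_add, map_mul, h1]
    change f _ + ε * f _ = _
    rw [map_lc, map_lc, Finset.sum_apply]
    simp only [lc, Finset.mul_sum]
    rw [← Finset.sum_add_distrib]
    refine Finset.sum_congr rfl fun j _ => ?_
    rw [map_mul, ← algebraMap_eq, AlgHom.commutes, ← hε, Pi.smul_apply, smul_eq_mul]
    ring
  rw [hf]
  exact H.sum_mem fun j _ => H.smul_mem _ (hH j)

theorem dehom_zero (k : Type) [Field k] (m : ℕ) (F : MvPolynomial (Fin (m + 1)) k) :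
    dehom k m 0 F = dh k m F := by
  unfold dehom dh
  congr 2
  funext j
  refine Fin.cases ?_ (fun j => ?_) j
  · simp
  · simp

/-- Let `k` be a field of characteristic zero and `X ⊂ P^{2n+1}` a smooth
cubic hypersurface over `k`. If `X` contains two skew `n`-planes, defined over a
quadratic extension `K` of `k` and conjugate over `k` (i.e. exchanged by the nontrivial
element `σ` of the Galois group of `K/k`), then `X` is rational over `k`.

The `n`-planes are given by their affine cones `H₁, H₂`, which are `(n+1)`-dimensional
`K`-linear subspaces of `K^{2n+2}`; skewness means `H₁ ⊓ H₂ = ⊥`, conjugacy means `σ`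
(applied coordinatewise) carries `H₁` onto `H₂`, and containment in `X` means the cubic
form `F` vanishes on them. Smoothness of `X` is checked over an algebraic closure. -/
theorem rational_of_skew_conjugate_planes (k K : Type) [Field k] [CharZero k]
    [Field K] [Algebra k K] (hquad : Module.finrank k K = 2)
    (σ : K ≃ₐ[k] K) (hσ : σ ≠ AlgEquiv.refl) (n : ℕ) (hn : 1 ≤ n)
    (F : MvPolynomial (Fin (2 * n + 2)) k) (hF : F.IsHomogeneous 3)
    (hsmooth : ∀ v : Fin (2 * n + 2) → AlgebraicClosure k, v ≠ 0 →
      eval v (map (algebraMap k (AlgebraicClosure k)) F) = 0 →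
      ∃ i, eval v (pderiv i (map (algebraMap k (AlgebraicClosure k)) F)) ≠ 0)
    (H₁ H₂ : Submodule K (Fin (2 * n + 2) → K))
    (hd₁ : Module.finrank K H₁ = n + 1) (hd₂ : Module.finrank K H₂ = n + 1)
    (hskew : H₁ ⊓ H₂ = ⊥)
    (hconj : ∀ x : Fin (2 * n + 2) → K, x ∈ H₁ ↔ (fun i => σ (x i)) ∈ H₂)
    (hX₁ : ∀ x ∈ H₁, aeval x F = 0) (hX₂ : ∀ x ∈ H₂, aeval x F = 0) :
    IsRationalHypersurface k (2 * n + 1) F := by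
  classical
  obtain ⟨d, δ, hδ, hσδ, gen, ind⟩ := quad_ext k K hquad σ hσ
  obtain ⟨a, b, U, V, ha₁, ha₂, h00, hUV, hUa, hUb, hVa, hVb⟩ :=
    lin_alg k K σ n H₁ H₂ hd₁ hd₂ hskew hconj d δ hδ hσδ gen ind
  have hinf : Infinite k := inferInstance
  have : CharZero K := charZero_of_injective_algebraMap (algebraMap k K).injective
  have hinfK : Infinite K := inferInstance
  have hd : ∀ t : k, t * t ≠ d := by
    intro t ht
    have h1 : (algebraMap k K (-t) + δ * algebraMap k K 1) *
        (algebraMap k K t + δ * algebraMap k K 1) = 0 := by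
      rw [map_neg, map_one]
      have : algebraMap k K t * algebraMap k K t = algebraMap k K d := by rw [← map_mul, ht]
      linear_combination hδ - this
    rcases mul_eq_zero.mp h1 with h | h
    · exact one_ne_zero (ind _ _ h).2
    · exact one_ne_zero (ind _ _ h).2
  have hδ0 : δ ≠ 0 := by
    intro h
    have := ind 0 1 (by simp [h])
    simp at this
  have hno : ∀ L Q : MvPolynomial (Fin (2 * n + 1 + 1)) k,
      L.IsHomogeneous 1 → Q.IsHomogeneous 2 → F ≠ L * Q :=
    fun L Q => no_linear_factor k (2 * n + 2) (by omega) F hsmooth L Q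
  let e : Fin n ⊕ Fin n ≃ Fin (2 * n + 1 - 1) :=
    finSumFinEquiv.trans (finCongr (by omega))
  have hp := pencil_vanish k K (N := 2 * n + 1) a b F e d δ hδ H₁ ha₁ hX₁
  have hm := pencil_vanish k K (N := 2 * n + 1) a b F e d (-δ) (by rw [neg_mul_neg, hδ]) H₂
    (fun j => by simpa only [neg_mul, ← sub_eq_add_neg] using ha₂ j) hX₂
  simp only [map_neg, neg_mul, ← sub_eq_add_neg] at hm
  obtain ⟨g, hg⟩ := cubic_pencil (mapAlgHom (Algebra.ofId k K))
    (map_injective (algebraMap k K) (algebraMap k K).injective) d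
    (C δ : MvPolynomial (Fin (2 * n + 1 - 1)) K)
    (by rw [← C_mul, hδ]; rfl)
    (mul_ne_zero two_ne_zero (by simpa using hδ0)) hF _ _ hp hm
  have hg3 := lead_ne_zero (2 * n + 1) a b U V h00 hUV hVb F hF hno e
  refine ⟨0, ?_⟩
  rw [dehom_zero]
  have hirr := dh_irreducible k (2 * n + 1) F hF hno
  set G := dh k (2 * n + 1) F with hG
  have hpr : (Ideal.span {G}).IsPrime :=
    (Ideal.span_singleton_prime hirr.ne_zero).mpr hirr.prime
  have hdom : IsDomain (MvPolynomial (Fin (2 * n + 1)) k ⧸ Ideal.span {G}) :=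
    Ideal.Quotient.isDomain _
  let q : MvPolynomial (Fin (2 * n + 1)) k →ₐ[k]
    (MvPolynomial (Fin (2 * n + 1)) k ⧸ Ideal.span {G}) := Ideal.Quotient.mkₐ k _
  have hq : Function.Surjective q := Ideal.Quotient.mkₐ_surjective k _
  let z : Fin (2 * n + 1 + 1) → MvPolynomial (Fin (2 * n + 1)) k := Fin.cases 1 X
  refine generic_equiv (2 * n + 1) a b U V h00 hUV hUa hUb hVa hVb F e d hd _ g hg3 hg
    (S := MvPolynomial (Fin (2 * n + 1)) k ⧸ Ideal.span {G})
    (fun i => q (z i)) (map_one q) ?_ ?_ ?_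
  · rw [← comp_aeval, AlgHom.comp_apply]
    change q G = 0
    exact Ideal.Quotient.eq_zero_iff_mem.mpr (Ideal.mem_span_singleton_self G)
  · intro v hv0 hvF
    have hz : ∀ i, (aeval (fun i : Fin (2 * n + 1) => v i.succ) :
        MvPolynomial (Fin (2 * n + 1)) k →ₐ[k] _) (z i) = v i := by
      intro i
      refine Fin.cases ?_ (fun j => ?_) i
      · simp [z, hv0]
      · simp [z]
    refine ⟨Ideal.Quotient.liftₐ (Ideal.span {G}) (aeval (fun i => v i.succ)) ?_, ?_⟩
    · intro p hp
      obtain ⟨r, rfl⟩ := Ideal.mem_span_singleton'.mp hp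
      rw [map_mul]
      have : (aeval (fun i : Fin (2 * n + 1) => v i.succ) :
        MvPolynomial (Fin (2 * n + 1)) k →ₐ[k] _) G = 0 := by
        change (aeval (fun i : Fin (2 * n + 1) => v i.succ) :
          MvPolynomial (Fin (2 * n + 1)) k →ₐ[k] _) (aeval z F) = 0
        rw [← AlgHom.comp_apply, comp_aeval, ← hvF]
        congr 2
        funext i
        exact hz i
      rw [this, mul_zero]
    · intro i
      exact hz i
  · rw [eq_top_iff]
    intro t _
    obtain ⟨p, rfl⟩ := hq t
    induction p using MvPolynomial.induction_on with
    | C c => rw [← algebraMap_eq, AlgHom.commutes]; exact Subalgebra.algebraMap_mem _ c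
    | add p r hp hr => rw [map_add]; exact Subalgebra.add_mem _ (hp trivial) (hr trivial)
    | mul_X p i hp =>
      rw [map_mul]
      exact Subalgebra.mul_mem _ (hp trivial) (Algebra.subset_adjoin ⟨i.succ, rfl⟩)
end

section
/- Let k be a field of characteristic ≠ 3. For every n ≥ 1, the Fermat cubic hypersurface X^{2n} = {x₀³ + ⋯ + x_{2n+1}³ = 0} ⊂ P^{2n+1} is rational over k, i.e. the function field k(X^{2n}) is isomorphic as a k-algebra to k(x₁, …, x_{2n}). -/
open MvPolynomial

theorem fc_two {k : Type} [Field k] (m : ℕ) (g : MvPolynomial (Fin m) k) (π : MvPolynomial (Fin m) k)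
   (hp : Prime π) (h1 : π ∣ g) (h2 : ¬ π ^ 2 ∣ g) :
   Irreducible (Polynomial.X ^ 3 + Polynomial.C g) := by
  have hdeg : (Polynomial.X ^ 3 + Polynomial.C g).degree = 3 := Polynomial.degree_X_pow_add_C (by norm_num) g
  have hm : (Polynomial.X ^ 3 + Polynomial.C g).Monic := Polynomial.monic_X_pow_add_C g (by norm_num)
  refine Polynomial.irreducible_of_eisenstein_criterion (P := Ideal.span {π}) ?_ ?_ ?_ ?_ ?_ ?_
  · exact (Ideal.span_singleton_prime hp.ne_zero).2 hp
  · rw [hm.leadingCoeff]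
    intro h
    exact hp.not_isUnit (isUnit_of_dvd_one (Ideal.mem_span_singleton.1 h))
  · intro j hj
    rw [hdeg] at hj
    rw [Ideal.mem_span_singleton]
    have hj' : j < 3 := by exact_mod_cast hj
    rcases Nat.eq_zero_or_pos j with rfl | hj0
    · simpa using h1
    · have : j ≠ 3 := by omega
      have h0 : j ≠ 0 := by omega
      simp [Polynomial.coeff_X_pow, Polynomial.coeff_C, this, h0]
  · rw [hdeg]; norm_num
  · rw [Ideal.span_singleton_pow, Ideal.mem_span_singleton]
    simpa using h2
  · exact hm.isPrimitive

theorem fc_succ {k : Type} [Field k] (m : ℕ) :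
   finSuccEquiv k m ((∑ i : Fin (m + 1), X i ^ 3) + 1)
     = Polynomial.X ^ 3 + Polynomial.C ((∑ i : Fin m, X i ^ 3) + 1) := by
  simp [Fin.sum_univ_succ, finSuccEquiv_X_zero, finSuccEquiv_X_succ, add_assoc]

theorem fc_irr {k : Type} [Field k] (h3 : (3 : k) ≠ 0) (m : ℕ) :
   Irreducible ((∑ i : Fin (m + 2), X i ^ 3) + 1 : MvPolynomial (Fin (m + 2)) k) := by
  induction m with
  | zero =>
    rw [← MulEquiv.irreducible_iff (finSuccEquiv k 1), fc_succ]
    refine fc_two _ _ (X 0 + 1) ?_ ?_ ?_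
    · rw [← MulEquiv.prime_iff (finSuccEquiv k 0)]
      simp only [map_add, finSuccEquiv_X_zero, map_one]
      have := Polynomial.prime_X_sub_C (-1 : MvPolynomial (Fin 0) k)
      simpa using this
    · refine ⟨X 0 ^ 2 - X 0 + 1, ?_⟩
      simp; ring
    · rintro ⟨q, hq⟩
      have hne : (X 0 + 1 : MvPolynomial (Fin 1) k) ≠ 0 := by
        intro h
        have := congrArg (aeval (fun _ => (0:k))) h
        simp at this
      have h : (X 0 + 1 : MvPolynomial (Fin 1) k) * (X 0 ^ 2 - X 0 + 1) = (X 0 + 1) * ((X 0 + 1) * q) := by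
        simp at hq
        linear_combination hq
      have h := congrArg (aeval (fun _ => (-1:k))) (mul_left_cancel₀ hne h)
      simp at h
      apply h3; linear_combination h
  | succ m ih =>
    rw [← MulEquiv.irreducible_iff (finSuccEquiv k (m + 2)), fc_succ]
    refine fc_two _ _ _ ih.prime dvd_rfl ?_
    rintro ⟨q, hq⟩
    refine ih.not_isUnit (isUnit_of_dvd_one ⟨q, ?_⟩)
    refine mul_left_cancel₀ ih.ne_zero ?_
    linear_combination hq

theorem fc_ident {A ι : Type} [CommRing A] [Fintype ι] (T : A) (a b : ι → A) :
    T ^ 3 + (∑ i, (a i * T - b i) ^ 3 + ∑ i, (a i + b i * T - b i) ^ 3) + 1 =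
      (T ^ 2 - T + 1) *
        (T * (1 + ∑ i, (a i ^ 2 - a i * b i + b i ^ 2) * (a i + b i)) +
          (1 + ∑ i, (a i ^ 2 - a i * b i + b i ^ 2) * (a i - 2 * b i))) := by
  have h : ∑ i, (a i * T - b i) ^ 3 + ∑ i, (a i + b i * T - b i) ^ 3 =
      (T ^ 2 - T + 1) * (T * (∑ i, (a i ^ 2 - a i * b i + b i ^ 2) * (a i + b i)) +
          (∑ i, (a i ^ 2 - a i * b i + b i ^ 2) * (a i - 2 * b i))) := by
    simp only [Finset.mul_sum, ← Finset.sum_add_distrib]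
    refine Finset.sum_congr rfl fun i _ => ?_
    ring
  linear_combination h

/-- the polynomial `G` -/
noncomputable def fcG (k : Type) [Field k] (ι : Type) [Fintype ι] : MvPolynomial (ι ⊕ ι) k :=
  1 + ∑ i : ι, (X (.inl i) ^ 2 - X (.inl i) * X (.inr i) + X (.inr i) ^ 2) * (X (.inl i) + X (.inr i))

/-- the polynomial `H` -/
noncomputable def fcH (k : Type) [Field k] (ι : Type) [Fintype ι] : MvPolynomial (ι ⊕ ι) k :=
  1 + ∑ i : ι, (X (.inl i) ^ 2 - X (.inl i) * X (.inr i) + X (.inr i) ^ 2) *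
    (X (.inl i) - 2 * X (.inr i))

/-- the Fermat cubic, in suitable variables -/
noncomputable def fcF (k : Type) [Field k] (ι : Type) [Fintype ι] :
    MvPolynomial (Option (ι ⊕ ι)) k := (∑ i, X i ^ 3) + 1

/-- images of the coordinates -/
def fcPt {A ι : Type} [CommRing A] (T : A) (a b : ι → A) : Option (ι ⊕ ι) → A
  | none => T
  | some (.inl i) => a i * T - b i
  | some (.inr i) => a i + b i * T - b i

theorem fc_key {k : Type} [Field k] {ι : Type} [Fintype ι] {F K : Type} [Field F] [Field K]
    [Algebra k F] [Algebra k K] (ψ : MvPolynomial (ι ⊕ ι) k →ₐ[k] F)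
    (θ : MvPolynomial (ι ⊕ ι) k →ₐ[k] K)
    (T : F) (T' : K) (hT : T * ψ (fcG k ι) + ψ (fcH k ι) = 0)
    (hT' : T' * θ (fcG k ι) + θ (fcH k ι) = 0) (p : MvPolynomial (Option (ι ⊕ ι)) k) :
    ∃ (N : ℕ) (q : MvPolynomial (ι ⊕ ι) k),
      ψ (fcG k ι) ^ N * aeval (fcPt T (fun i => ψ (X (.inl i))) (fun i => ψ (X (.inr i)))) p = ψ q ∧
      θ (fcG k ι) ^ N * aeval (fcPt T' (fun i => θ (X (.inl i))) (fun i => θ (X (.inr i)))) p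
        = θ q := by
  induction p using MvPolynomial.induction_on with
  | C c =>
    refine ⟨0, C c, ?_, ?_⟩
    · simp [← MvPolynomial.algebraMap_eq]
    · simp [← MvPolynomial.algebraMap_eq]
  | add p₁ p₂ h₁ h₂ =>
    obtain ⟨N₁, q₁, h₁, h₁'⟩ := h₁
    obtain ⟨N₂, q₂, h₂, h₂'⟩ := h₂
    refine ⟨N₁ + N₂, fcG k ι ^ N₂ * q₁ + fcG k ι ^ N₁ * q₂, ?_, ?_⟩
    · simp only [map_add, map_mul, map_pow, ← h₁, ← h₂]; ring
    · simp only [map_add, map_mul, map_pow, ← h₁', ← h₂']; ring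
  | mul_X p j h =>
    obtain ⟨N, q, h, h'⟩ := h
    rcases j with _ | i | i
    · refine ⟨N + 1, q * (- fcH k ι), ?_, ?_⟩
      · simp only [map_mul, map_neg, aeval_X, fcPt, ← h]
        rw [← eq_neg_iff_add_eq_zero] at hT
        rw [← hT]; ring
      · simp only [map_mul, map_neg, aeval_X, fcPt, ← h']
        rw [← eq_neg_iff_add_eq_zero] at hT'
        rw [← hT']; ring
    · refine ⟨N + 1, q * (- X (.inl i) * fcH k ι - X (.inr i) * fcG k ι), ?_, ?_⟩
      · simp only [map_mul, map_neg, map_sub, aeval_X, fcPt, ← h]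
        rw [add_comm, ← eq_neg_iff_add_eq_zero] at hT
        rw [hT]; ring
      · simp only [map_mul, map_neg, map_sub, aeval_X, fcPt, ← h']
        rw [add_comm, ← eq_neg_iff_add_eq_zero] at hT'
        rw [hT']; ring
    · refine ⟨N + 1, q * (X (.inl i) * fcG k ι - X (.inr i) * fcH k ι - X (.inr i) * fcG k ι),
        ?_, ?_⟩
      · simp only [map_mul, map_sub, aeval_X, fcPt, ← h]
        rw [add_comm, ← eq_neg_iff_add_eq_zero] at hT
        rw [hT]; ring
      · simp only [map_mul, map_sub, aeval_X, fcPt, ← h']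
        rw [add_comm, ← eq_neg_iff_add_eq_zero] at hT'
        rw [hT']; ring

theorem fc_aeval_F {k : Type} [Field k] {ι : Type} [Fintype ι] {F : Type} [Field F]
    [Algebra k F] (ψ : MvPolynomial (ι ⊕ ι) k →ₐ[k] F) (T : F) :
    aeval (fcPt T (fun i => ψ (X (.inl i))) (fun i => ψ (X (.inr i)))) (fcF k ι) =
      (T ^ 2 - T + 1) * (T * ψ (fcG k ι) + ψ (fcH k ι)) := by
  have := fc_ident T (fun i => ψ (X (.inl i))) (fun i => ψ (X (.inr i)))
  simp only [fcG, fcH, fcF, map_add, map_sum, map_mul, map_pow, map_sub, map_one, aeval_X, map_ofNat,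
    Fintype.sum_option, Fintype.sum_sum_type, fcPt]
  exact this

theorem fc_f1 {F : Type} [Field F] (T x y D : F) (h : D ≠ 0) (e : T ^ 2 - T + 1 = D) :
    x = (x * T + y - x) / D * T - (y * T - x) / D := by
  field_simp
  rw [← e]; ring

theorem fc_f2 {F : Type} [Field F] (T x y D : F) (h : D ≠ 0) (e : T ^ 2 - T + 1 = D) :
    y = (x * T + y - x) / D + (y * T - x) / D * T - (y * T - x) / D := by
  field_simp
  rw [← e]; ring

theorem fc_f3 {F : Type} [Field F] (T x y D : F) (h : D ≠ 0) (e : T ^ 2 - T + 1 = D) :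
    (x ^ 2 - x * y + y ^ 2) * ((x + y) * T + y - 2 * x) =
    D ^ 2 * ((((x * T + y - x) / D) ^ 2 - ((x * T + y - x) / D) * ((y * T - x) / D) +
      ((y * T - x) / D) ^ 2) * ((x * T + y - x) / D + (y * T - x) / D)) := by
  field_simp
  rw [← e]; ring

theorem fc_f4 {F : Type} [Field F] (T a b D : F) (h : D ≠ 0) (e : T ^ 2 - T + 1 = D) :
    ((a * T - b) * T + (a + b * T - b) - (a * T - b)) / D = a := by
  rw [div_eq_iff h, ← e]; ring

theorem fc_f5 {F : Type} [Field F] (T a b D : F) (h : D ≠ 0) (e : T ^ 2 - T + 1 = D) :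
    ((a + b * T - b) * T - (a * T - b)) / D = b := by
  rw [div_eq_iff h, ← e]; ring

theorem fc_core {k : Type} [Field k] (h3 : (3 : k) ≠ 0) (ι : Type) [Fintype ι]
    {R F K : Type} [CommRing R] [IsDomain R] [Algebra k R] [Field F] [Field K]
    [Algebra k F] [Algebra k K] [Algebra R F] [IsFractionRing R F] [IsScalarTower k R F]
    [Algebra (MvPolynomial (ι ⊕ ι) k) K] [IsFractionRing (MvPolynomial (ι ⊕ ι) k) K]
    [IsScalarTower k (MvPolynomial (ι ⊕ ι) k) K]
    (Q : (MvPolynomial (Option (ι ⊕ ι)) k ⧸ Ideal.span {fcF k ι}) ≃ₐ[k] R) :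
    Nonempty (F ≃ₐ[k] K) := by
  let g : MvPolynomial (Option (ι ⊕ ι)) k →ₐ[k] R :=
    Q.toAlgHom.comp (Ideal.Quotient.mkₐ k _)
  have hg : ∀ p, g p = 0 ↔ fcF k ι ∣ p := fun p => by
    rw [← Ideal.mem_span_singleton]
    rw [← Ideal.Quotient.eq_zero_iff_mem]
    exact Q.map_eq_zero_iff
  let j : MvPolynomial (Option (ι ⊕ ι)) k →ₐ[k] F := (IsScalarTower.toAlgHom k R F).comp g
  have hj : ∀ p, j p = 0 ↔ fcF k ι ∣ p := fun p => by
    rw [← hg]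
    exact IsFractionRing.to_map_eq_zero_iff (K := F) (x := g p)
  -- the base point
  let ev : MvPolynomial (Option (ι ⊕ ι)) k →ₐ[k] k :=
    aeval (fun o => Option.elim o (-1) (fun _ => 0))
  have hev : ∀ p, j p = 0 → ev p = 0 := fun p hp => by
    obtain ⟨q, rfl⟩ := (hj p).1 hp
    have : ev (fcF k ι) = 0 := by
      simp [ev, fcF, Fintype.sum_option, Odd.neg_one_pow (show Odd 3 by decide)]
    rw [map_mul, this, zero_mul]
  let T : F := j (X none)
  let x : ι → F := fun i => j (X (some (.inl i)))
  let y : ι → F := fun i => j (X (some (.inr i)))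
  have hD : T ^ 2 - T + 1 ≠ 0 := by
    intro h
    have h2 := hev (X none ^ 2 - X none + 1) (by simpa [T] using h)
    apply h3
    simp [ev] at h2
    linear_combination h2
  let ψ : MvPolynomial (ι ⊕ ι) k →ₐ[k] F :=
    aeval (Sum.elim (fun i => (x i * T + y i - x i) / (T ^ 2 - T + 1))
      (fun i => (y i * T - x i) / (T ^ 2 - T + 1)))
  have hψl : ∀ i, ψ (X (.inl i)) = (x i * T + y i - x i) / (T ^ 2 - T + 1) := fun i => by simp [ψ]
  have hψr : ∀ i, ψ (X (.inr i)) = (y i * T - x i) / (T ^ 2 - T + 1) := fun i => by simp [ψ]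
  have hjpt : j = aeval (fcPt T (fun i => ψ (X (.inl i))) (fun i => ψ (X (.inr i)))) := by
    apply MvPolynomial.algHom_ext
    rintro (_ | i | i)
    · simp [fcPt, T]
    · simp only [aeval_X, fcPt, hψl, hψr]
      exact fc_f1 _ _ _ _ hD rfl
    · simp only [aeval_X, fcPt, hψl, hψr]
      exact fc_f2 _ _ _ _ hD rfl
  have hT : T * ψ (fcG k ι) + ψ (fcH k ι) = 0 := by
    have h1 : j (fcF k ι) = 0 := (hj _).2 dvd_rfl
    rw [hjpt, fc_aeval_F] at h1
    exact (mul_eq_zero.1 h1).resolve_left hD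
  have hG : ψ (fcG k ι) ≠ 0 := by
    intro h
    have h2 := hev ((X none ^ 2 - X none + 1) ^ 2 + ∑ i : ι,
      (X (some (.inl i)) ^ 2 - X (some (.inl i)) * X (some (.inr i)) + X (some (.inr i)) ^ 2) *
      ((X (some (.inl i)) + X (some (.inr i))) * X none + X (some (.inr i))
        - 2 * X (some (.inl i)))) (by
      have h4 : (T ^ 2 - T + 1) ^ 2 * ψ (fcG k ι) = 0 := by rw [h, mul_zero]
      rw [← h4]
      simp only [fcG, map_add, map_sum, map_mul, map_pow, map_sub, map_one, map_ofNat, hψl, hψr]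
      rw [mul_add, mul_one, Finset.mul_sum]
      congr 1
      refine Finset.sum_congr rfl fun i _ => ?_
      exact fc_f3 _ _ _ _ hD rfl)
    simp [ev] at h2
    apply h3
    linear_combination h2
  let θ : MvPolynomial (ι ⊕ ι) k →ₐ[k] K := IsScalarTower.toAlgHom k _ K
  have hθ : Function.Injective θ := IsFractionRing.injective _ K
  have hG' : θ (fcG k ι) ≠ 0 := by
    intro h
    have : fcG k ι = 0 := hθ (by rw [h, map_zero])
    exact hG (by rw [this, map_zero])
  let T' : K := - θ (fcH k ι) / θ (fcG k ι)
  have hT' : T' * θ (fcG k ι) + θ (fcH k ι) = 0 := by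
    simp only [T']; field_simp; ring
  let φ₀ : MvPolynomial (Option (ι ⊕ ι)) k →ₐ[k] K :=
    aeval (fcPt T' (fun i => θ (X (.inl i))) (fun i => θ (X (.inr i))))
  have hφ₀ : φ₀ (fcF k ι) = 0 := by
    simp only [φ₀]
    rw [fc_aeval_F, hT', mul_zero]
  let φ₁ : (MvPolynomial (Option (ι ⊕ ι)) k ⧸ Ideal.span {fcF k ι}) →ₐ[k] K :=
      Ideal.Quotient.liftₐ _ φ₀ (by
    intro a ha
    obtain ⟨q, rfl⟩ := Ideal.mem_span_singleton.1 ha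
    rw [map_mul, hφ₀, zero_mul])
  let φ : R →ₐ[k] K := φ₁.comp Q.symm.toAlgHom
  have hφg : ∀ p, φ (g p) = φ₀ p := fun p => by
    change φ₁ (Q.symm (Q (Ideal.Quotient.mkₐ k _ p))) = _
    rw [Q.symm_apply_apply]
    rfl
  have hφ : Function.Injective φ := by
    rw [injective_iff_map_eq_zero]
    intro r hr
    obtain ⟨p, rfl⟩ : ∃ p, g p = r :=
      (Q.surjective.comp (Ideal.Quotient.mkₐ_surjective k _)) r
    rw [hφg] at hr
    rw [hg, ← hj]
    obtain ⟨N, q, h1, h2⟩ := fc_key ψ θ T T' hT hT' p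
    change _ * φ₀ p = _ at h2
    rw [hr, mul_zero] at h2
    have hq : q = 0 := hθ (by rw [← h2, map_zero])
    rw [← hjpt, hq, map_zero] at h1
    exact (mul_eq_zero.1 h1).resolve_left (pow_ne_zero _ hG)
  let Φ : F →ₐ[k] K := IsFractionRing.liftAlgHom hφ
  have hΦj : ∀ p, Φ (j p) = φ₀ p := fun p => by
    rw [← hφg]
    exact IsFractionRing.lift_algebraMap hφ (g p)
  have hΦψ : ∀ q, Φ (ψ q) = θ q := by
    have hTT : Φ T = T' := by simp [T, hΦj, φ₀, fcPt]
    have hD' : T' ^ 2 - T' + 1 ≠ 0 := by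
      rw [← hTT]
      intro h
      apply hD
      apply Φ.injective
      simpa using h
    have : Φ.comp ψ = θ := by
      apply MvPolynomial.algHom_ext
      rintro (i | i)
      · simp only [AlgHom.comp_apply, hψl, map_div₀, map_sub, map_add, map_mul, map_pow, map_one, hTT,
          x, y, hΦj]
        simp only [φ₀, aeval_X, fcPt]
        exact fc_f4 _ _ _ _ hD' rfl
      · simp only [AlgHom.comp_apply, hψr, map_div₀, map_sub, map_add, map_mul, map_pow, map_one, hTT,
          x, y, hΦj]
        simp only [φ₀, aeval_X, fcPt]
        exact fc_f5 _ _ _ _ hD' rfl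
    intro q
    rw [← this]; rfl
  refine ⟨AlgEquiv.ofBijective Φ ⟨Φ.injective, ?_⟩⟩
  intro z
  obtain ⟨p, q, -, rfl⟩ := IsFractionRing.div_surjective (MvPolynomial (ι ⊕ ι) k) z
  refine ⟨ψ p / ψ q, ?_⟩
  rw [map_div₀, hΦψ, hΦψ]; rfl

theorem fermat_cubic_even_dim_rational (k : Type) [Field k] (h3 : ringChar k ≠ 3)
    (n : ℕ) (hn : 1 ≤ n) :
    Nonempty
      ((FractionRing (MvPolynomial (Fin (2 * n + 1)) k ⧸
          Ideal.span {(∑ i : Fin (2 * n + 1), X i ^ 3) + (1 : MvPolynomial (Fin (2 * n + 1)) k)}))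
        ≃ₐ[k] FractionRing (MvPolynomial (Fin (2 * n)) k)) := by
  have h3' : (3 : k) ≠ 0 := by
    intro h
    have hd : ringChar k ∣ 3 := ringChar.dvd (by exact_mod_cast h)
    rcases (Nat.dvd_prime Nat.prime_three).1 hd with h1 | h1
    · exact CharP.ringChar_ne_one h1
    · exact h3 h1
  let e' : Fin (2 * n) ≃ Fin n ⊕ Fin n :=
    Fintype.equivOfCardEq (by simp; ring)
  let e : Fin (2 * n + 1) ≃ Option (Fin n ⊕ Fin n) :=
    Fintype.equivOfCardEq (by simp; ring)
  obtain ⟨m, hm⟩ : ∃ m, 2 * n + 1 = m + 2 := ⟨2 * n - 1, by omega⟩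
  have hirr : Irreducible ((∑ i : Fin (2 * n + 1), X i ^ 3) + 1 :
      MvPolynomial (Fin (2 * n + 1)) k) := by
    rw [hm]; exact fc_irr h3' m
  have hren : renameEquiv k e ((∑ i : Fin (2 * n + 1), X i ^ 3) + 1) = fcF k (Fin n) := by
    simp only [fcF, map_add, map_sum, map_pow, map_one, renameEquiv_apply, rename_X]
    rw [Equiv.sum_comp e (fun i => (X i : MvPolynomial _ k) ^ 3)]
  have hirr' : Irreducible (fcF k (Fin n)) := by
    rw [← hren]; exact (MulEquiv.irreducible_iff (renameEquiv k e)).2 hirr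
  have : (Ideal.span {fcF k (Fin n)}).IsPrime :=
    (Ideal.span_singleton_prime hirr'.ne_zero).2 hirr'.prime
  have q := Ideal.quotientEquivAlg (Ideal.span {(∑ i : Fin (2 * n + 1), X i ^ 3) +
      (1 : MvPolynomial (Fin (2 * n + 1)) k)}) (Ideal.span {fcF k (Fin n)}) (renameEquiv k e) (by
    rw [Ideal.map_span, Set.image_singleton, ← hren]; rfl)
  have hdom : IsDomain (MvPolynomial (Fin (2 * n + 1)) k ⧸
      Ideal.span {(∑ i : Fin (2 * n + 1), X i ^ 3) +
        (1 : MvPolynomial (Fin (2 * n + 1)) k)}) := by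
    have : (Ideal.span {(∑ i : Fin (2 * n + 1), X i ^ 3) +
        (1 : MvPolynomial (Fin (2 * n + 1)) k)}).IsPrime :=
      (Ideal.span_singleton_prime hirr.ne_zero).2 hirr.prime
    infer_instance
  obtain ⟨E⟩ := fc_core h3' (Fin n) (F := FractionRing (MvPolynomial (Fin (2 * n + 1)) k ⧸
    Ideal.span {(∑ i : Fin (2 * n + 1), X i ^ 3) + (1 : MvPolynomial (Fin (2 * n + 1)) k)}))
    (K := FractionRing (MvPolynomial (Fin n ⊕ Fin n) k)) q.symm
  exact ⟨E.trans (IsFractionRing.algEquivOfAlgEquiv (renameEquiv k e'.symm))⟩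
end

section
/- Let n ≥ 2 and let Ā = u₀³ + Σ_{i=0}^{n-1}(u_{2i+1}³ + 3u_{2i+1}²u_{2i+2} + 3u_{2i+1}u_{2i+2}² + 9u_{2i+2}³) and B̄ = u₀³ + Σ_{i=0}^{n-1}(u_{2i+1}³ - u_{2i+1}²u_{2i+2} + 3u_{2i+1}u_{2i+2}² - 3u_{2i+2}³). Then the complete intersection Y^{2n-2} = {Ā = B̄ = 0} ⊂ P^{2n} is irreducible. -/
section FrozenDefs
open MvPolynomial

/-- The variable `u_{2i+1}` of `k[u₀, …, u_{2n}]`, for `i = 0, …, n-1`. -/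
def oddVar (n : ℕ) (i : Fin n) : Fin (2 * n + 1) := ⟨2 * i.1 + 1, by have := i.2; omega⟩

/-- The variable `u_{2i+2}` of `k[u₀, …, u_{2n}]`, for `i = 0, …, n-1`. -/
def evenVar (n : ℕ) (i : Fin n) : Fin (2 * n + 1) := ⟨2 * i.1 + 2, by have := i.2; omega⟩

/-- `Ā = u₀³ + Σ_{i=0}^{n-1} (u_{2i+1}³ + 3u_{2i+1}²u_{2i+2} + 3u_{2i+1}u_{2i+2}² + 9u_{2i+2}³)`. -/
noncomputable def Abar (k : Type) [Field k] (n : ℕ) : MvPolynomial (Fin (2 * n + 1)) k :=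
  X ⟨0, by omega⟩ ^ 3 + ∑ i : Fin n,
    (X (oddVar n i) ^ 3 + 3 * X (oddVar n i) ^ 2 * X (evenVar n i)
      + 3 * X (oddVar n i) * X (evenVar n i) ^ 2 + 9 * X (evenVar n i) ^ 3)

/-- `B̄ = u₀³ + Σ_{i=0}^{n-1} (u_{2i+1}³ - u_{2i+1}²u_{2i+2} + 3u_{2i+1}u_{2i+2}² - 3u_{2i+2}³)`. -/
noncomputable def Bbar (k : Type) [Field k] (n : ℕ) : MvPolynomial (Fin (2 * n + 1)) k :=
  X ⟨0, by omega⟩ ^ 3 + ∑ i : Fin n,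
    (X (oddVar n i) ^ 3 - X (oddVar n i) ^ 2 * X (evenVar n i)
      + 3 * X (oddVar n i) * X (evenVar n i) ^ 2 - 3 * X (evenVar n i) ^ 3)

end FrozenDefs

section Helpers
open Polynomial

/-- Primality criterion for a two step tower. -/
theorem fci_prime_of_tower {R F : Type*} [CommRing R] [Field F] (ψ : R →+* F) (q : R)
    (hker : ∀ r, ψ r = 0 → q ∣ r) (hq : ψ q = 0) (h : R[X]) (hm : h.Monic)
    (hirr : Irreducible (h.map ψ)) :
    (Ideal.span {C q, h} : Ideal R[X]).IsPrime := by
  have key : ∀ f : R[X], f ∈ (Ideal.span {C q, h} : Ideal R[X]) ↔ h.map ψ ∣ f.map ψ := by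
    intro f
    constructor
    · intro hf
      obtain ⟨a, b, rfl⟩ := Ideal.mem_span_pair.1 hf
      simp [hq]
    · intro hf
      have h0 : (f %ₘ h).map ψ = 0 := by
        rw [map_modByMonic ψ hm]
        exact (modByMonic_eq_zero_iff_dvd (hm.map ψ)).2 hf
      have h1 : C q ∣ f %ₘ h := by
        rw [C_dvd_iff_dvd_coeff]
        intro i
        apply hker
        rw [← coeff_map, h0, coeff_zero]
      obtain ⟨g, hg⟩ := h1
      rw [← modByMonic_add_div f h, hg]
      exact Ideal.mem_span_pair.2 ⟨g, f /ₘ h, by ring⟩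
  refine ⟨?_, ?_⟩
  · rw [Ideal.ne_top_iff_one, key]
    intro h1
    rw [Polynomial.map_one] at h1
    exact hirr.not_isUnit (isUnit_of_dvd_one h1)
  · intro f g hfg
    rw [key, Polynomial.map_mul] at hfg
    rw [key, key]
    exact hirr.prime.dvd_or_dvd hfg

/-- `Y a² = -(3Y³+β) b²` has no nontrivial solution. -/
theorem fci_nonsquare {S : Type*} [CommRing S] [IsDomain S] (β : S)
    (hβ : β ≠ 0) (a b : S[X]) (hb : b ≠ 0)
    (h : X * a ^ 2 = -(3 * X ^ 3 + C β) * b ^ 2) : False := by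
  have hc : (-(3 * X ^ 3 + C β) : S[X]).coeff 0 ≠ 0 := by
    simpa [mul_coeff_zero] using hβ
  have hne : (-(3 * X ^ 3 + C β) : S[X]) ≠ 0 := by
    intro h0
    rw [h0] at hc
    simp at hc
  have ha : a ≠ 0 := by
    rintro rfl
    have : -(3 * X ^ 3 + C β) * b ^ 2 = 0 := by rw [← h]; simp
    exact mul_ne_zero hne (pow_ne_zero 2 hb) this
  have h1 := congrArg natTrailingDegree h
  rw [natTrailingDegree_mul X_ne_zero (pow_ne_zero 2 ha),
    natTrailingDegree_mul hne (pow_ne_zero 2 hb), sq, sq, natTrailingDegree_mul ha ha,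
    natTrailingDegree_mul hb hb, natTrailingDegree_X,
    natTrailingDegree_eq_zero.2 (Or.inr hc)] at h1
  omega

/-- `αY³ + β³` is not a cube. -/
theorem fci_noncube {S : Type*} [CommRing S] [IsDomain S] [CharZero S] (α β : S)
    (hα : α ≠ 0) (hβ : β ≠ 0) (t : S[X]) (h : t ^ 3 = C α * X ^ 3 + C (β ^ 3)) : False := by
  have hd : t.natDegree ≤ 1 := by
    have h1 : (t ^ 3).natDegree ≤ 3 := by
      rw [h]; compute_degree
    rw [natDegree_pow] at h1
    omega
  obtain ⟨a, b, rfl⟩ := exists_eq_X_add_C_of_natDegree_le_one hd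
  have e : (C a * X + C b) ^ 3 = C (a ^ 3) * X ^ 3 + C (3 * a ^ 2 * b) * X ^ 2
      + C (3 * a * b ^ 2) * X + C (b ^ 3) := by
    simp only [map_mul, map_pow, map_ofNat]; ring
  rw [e] at h
  have hco : ∀ c₃ c₂ c₁ c₀ : S, C c₃ * X ^ 3 + C c₂ * X ^ 2 + C c₁ * X + C c₀
      = C α * X ^ 3 + C (β ^ 3) → c₀ = β ^ 3 ∧ c₂ = 0 ∧ c₃ = α := by
    intro c₃ c₂ c₁ c₀ h
    generalize β ^ 3 = γ at h ⊢
    have h0 := congrArg (fun f => coeff f 0) h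
    have h2 := congrArg (fun f => coeff f 2) h
    have h3 := congrArg (fun f => coeff f 3) h
    simp [coeff_X, coeff_C, coeff_X_pow] at h0 h2 h3
    exact ⟨h0, h2, h3⟩
  obtain ⟨h0, h2, h3⟩ := hco _ _ _ _ h
  have h2' : a = 0 ∨ b = 0 := by simpa using h2
  rcases h2' with h2 | h2
  · subst h2
    apply hα
    rw [← h3]; simp
  · subst h2
    apply hβ
    simpa using h0.symm

theorem fci_core_aux {S : Type*} [CommRing S] [IsDomain S] [UniqueFactorizationMonoid S] [CharZero S]
    (M : Type*) [Field M] [Algebra S[X] M] [IsFractionRing S[X] M]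
    (p β : S) (hβ : β ≠ 0) (hα : p ^ 2 + 3 * β ^ 2 ≠ 0) :
    (Ideal.span {C (C X * X ^ 2 + C (3 * X ^ 3 + C β)),
      X ^ 3 + C (C (C p) + X ^ 3 + 3 * C X ^ 2 * X)} : Ideal S[X][X][X]).IsPrime := by
  obtain ⟨y, hyX⟩ : ∃ y : M, algebraMap S[X] M X = y := ⟨_, rfl⟩
  obtain ⟨b, hbX⟩ : ∃ y : M, algebraMap S[X] M (C β) = y := ⟨_, rfl⟩
  obtain ⟨c, hcX⟩ : ∃ y : M, algebraMap S[X] M (C p) = y := ⟨_, rfl⟩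
  have hinj : Function.Injective (algebraMap S[X] M) := IsFractionRing.injective _ _
  have hy : y ≠ 0 := by
    intro h
    exact X_ne_zero (hinj ((hyX.trans h).trans (map_zero _).symm))
  obtain ⟨d, hd⟩ : ∃ d : M, y * d = -(3 * y ^ 3 + b) :=
    ⟨-(3 * y ^ 3 + b) / y, by field_simp⟩
  have hsq : ∀ r : M, r ^ 2 ≠ d := by
    intro r hr
    obtain ⟨u, v, hv, rfl⟩ := IsFractionRing.div_surjective (A := S[X]) r
    have hv0 : v ≠ 0 := nonZeroDivisors.ne_zero hv
    have hv1 : algebraMap S[X] M v ≠ 0 := fun h => hv0 (hinj (h.trans (map_zero _).symm))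
    apply fci_nonsquare β hβ u v hv0
    apply hinj
    rw [← hr] at hd
    simp only [map_mul, map_pow, map_neg, map_add, map_ofNat, hyX, hbX]
    rw [← hd]
    field_simp
  have : Fact (∀ r : M, r ^ 2 ≠ d + 0 * r) := ⟨fun r => by simpa using hsq r⟩
  let F := QuadraticAlgebra M d 0
  let w : F := ⟨0, 1⟩
  have hw : w ^ 2 = algebraMap M F d := by
    rw [sq]
    ext <;> simp [w, F]
  let ψ : S[X][X] →+* F := (aeval w : M[X] →ₐ[M] F).toRingHom.comp (mapRingHom (algebraMap S[X] M))
  have hψC : ∀ t : S[X], ψ (C t) = algebraMap M F (algebraMap S[X] M t) := by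
    intro t; simp [ψ]
  have hψX : ψ X = w := by simp [ψ]
  have hmin : X ^ 2 - C d = minpoly M w := by
    apply minpoly.eq_of_irreducible_of_monic
    · exact X_pow_sub_C_irreducible_of_prime Nat.prime_two hsq
    · simp [hw]
    · exact monic_X_pow_sub_C _ two_ne_zero
  obtain ⟨γ, hγ⟩ : ∃ γ : S[X], γ = 3 * X ^ 3 + C β := ⟨_, rfl⟩
  have hγM : algebraMap S[X] M γ = 3 * y ^ 3 + b := by
    rw [hγ]
    simp only [map_add, map_mul, map_pow, map_ofNat, hyX, hbX]
  rw [← hγ]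
  set Q : S[X][X] := C X * X ^ 2 + C γ with hQ
  have hQmap : Q.map (algebraMap S[X] M) = C y * (X ^ 2 - C d) := by
    rw [mul_sub, ← C_mul, hd, hQ]
    simp only [Polynomial.map_add, Polynomial.map_mul, Polynomial.map_pow, map_C, map_X, hyX, hγM,
      C_neg]
    ring
  have hprim : Q.IsPrimitive := by
    intro r hr
    rw [C_dvd_iff_dvd_coeff] at hr
    have h2 : r ∣ X := by simpa [hQ, coeff_X_pow, coeff_C] using hr 2
    have h0 : r ∣ γ := by simpa [hQ, coeff_X_pow, coeff_C] using hr 0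
    rw [hγ] at h0
    obtain ⟨s, hs⟩ := h2
    rcases (irreducible_X (R := S)).isUnit_or_isUnit hs with h | h
    · exact h
    · exfalso
      have hX : X ∣ 3 * X ^ 3 + C β := by
        refine dvd_trans ?_ h0
        rw [hs]
        exact (h.mul_right_dvd).2 dvd_rfl
      rw [X_dvd_iff] at hX
      apply hβ
      simpa [mul_coeff_zero] using hX
  have hnorm : ∀ z : F, QuadraticAlgebra.norm z = z.re * z.re - d * z.im * z.im := by
    intro z
    rw [QuadraticAlgebra.norm_def]; ring
  refine fci_prime_of_tower ψ Q ?_ ?_ _ ?_ ?_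
  · intro r hr
    apply hprim.dvd_of_fraction_map_dvd_fraction_map (K := M)
    rw [hQmap, hmin]
    have h1 : minpoly M w ∣ r.map (algebraMap S[X] M) := minpoly.dvd M w hr
    have hu : IsUnit (C y : M[X]) := isUnit_C.2 (isUnit_iff_ne_zero.2 hy)
    exact (hu.mul_left_dvd).2 h1
  · change aeval w (Q.map (algebraMap S[X] M)) = 0
    rw [hQmap, hmin]; simp
  · exact monic_X_pow_add_C _ three_ne_zero
  · have e : (X ^ 3 + C (C (C p) + X ^ 3 + 3 * C X ^ 2 * X) : S[X][X][X]).map ψ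
        = X ^ 3 - C (-(ψ (C (C p) + X ^ 3 + 3 * C X ^ 2 * X))) := by
      rw [C_neg, sub_neg_eq_add, Polynomial.map_add, Polynomial.map_pow, map_X, map_C]
    rw [e]
    apply X_pow_sub_C_irreducible_of_prime Nat.prime_three
    intro r hr
    have e2 : ψ (C (C p) + X ^ 3 + 3 * C X ^ 2 * X) = (⟨c, d + 3 * y ^ 2⟩ : F) := by
      have : ψ (C (C p) + X ^ 3 + 3 * C X ^ 2 * X) =
          algebraMap M F c + algebraMap M F (d + 3 * y ^ 2) * w := by
        simp only [map_add, map_mul, map_pow, map_ofNat, hψC, hψX, hyX, hcX]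
        rw [← hw]
        ring
      rw [this]
      generalize d + 3 * y ^ 2 = f
      ext <;> simp [w, F]
    rw [e2] at hr
    have h3 := congrArg QuadraticAlgebra.norm hr
    rw [map_pow, QuadraticAlgebra.norm_neg, hnorm (⟨c, d + 3 * y ^ 2⟩ : F)] at h3
    simp only at h3
    set ν := QuadraticAlgebra.norm r with hν
    have h4 : (y * ν) ^ 3 = algebraMap S[X] M (C (p ^ 2 + 3 * β ^ 2) * X ^ 3 + C (β ^ 3)) := by
      have : (y * ν) ^ 3 = (c ^ 2 + 3 * b ^ 2) * y ^ 3 + b ^ 3 := by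
        rw [mul_pow, h3]
        have hb : b = -(y * d) - 3 * y ^ 3 := by rw [hd]; ring
        rw [hb]
        ring
      rw [this]
      simp only [map_add, map_mul, map_pow, map_ofNat, hyX, hbX, hcX]
    have hint : IsIntegral S[X] (y * ν) := by
      apply IsIntegral.of_pow (n := 3) (by norm_num)
      rw [h4]
      exact isIntegral_algebraMap
    obtain ⟨t, ht⟩ := IsIntegrallyClosed.isIntegral_iff.1 hint
    apply fci_noncube _ β hα hβ t
    apply hinj
    rw [map_pow, ht, h4]

theorem fci_core {S : Type*} [CommRing S] [IsDomain S] [UniqueFactorizationMonoid S] [CharZero S]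
    (p β : S) (hβ : β ≠ 0) (hα : p ^ 2 + 3 * β ^ 2 ≠ 0) :
    (Ideal.span {C (C X * X ^ 2 + C (3 * X ^ 3 + C β)),
      X ^ 3 + C (C (C p) + X ^ 3 + 3 * C X ^ 2 * X)} : Ideal S[X][X][X]).IsPrime :=
  fci_core_aux (FractionRing S[X]) p β hβ hα

end Helpers

section Main
open MvPolynomial

/-- Splitting off the variables `u₀, u₁, u₂`. -/
noncomputable def fciEquiv (k : Type) [Field k] (m : ℕ) :
    MvPolynomial (Fin (m + 3)) k ≃ₐ[k]
      Polynomial (Polynomial (Polynomial (MvPolynomial (Fin m) k))) :=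
  (finSuccEquiv k (m + 2)).trans (Polynomial.mapAlgEquiv
    ((finSuccEquiv k (m + 1)).trans (Polynomial.mapAlgEquiv (finSuccEquiv k m))))

theorem fciEquiv_zero (k : Type) [Field k] (m : ℕ) (i : Fin (m + 3)) (hi : i.1 = 0) :
    fciEquiv k m (X i) = Polynomial.X := by
  obtain rfl : i = 0 := Fin.ext hi
  simp [fciEquiv, finSuccEquiv_X_zero]

theorem fciEquiv_one (k : Type) [Field k] (m : ℕ) (i : Fin (m + 3)) (hi : i.1 = 1) :
    fciEquiv k m (X i) = Polynomial.C Polynomial.X := by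
  obtain rfl : i = Fin.succ 0 := Fin.ext hi
  simp only [fciEquiv, AlgEquiv.trans_apply, finSuccEquiv_X_succ]
  simp [finSuccEquiv_X_zero]

theorem fciEquiv_two (k : Type) [Field k] (m : ℕ) (i : Fin (m + 3)) (hi : i.1 = 2) :
    fciEquiv k m (X i) = Polynomial.C (Polynomial.C Polynomial.X) := by
  obtain rfl : i = Fin.succ (Fin.succ 0) := Fin.ext hi
  simp only [fciEquiv, AlgEquiv.trans_apply, finSuccEquiv_X_succ, Polynomial.coe_mapAlgEquiv,
    Polynomial.map_C, RingHom.coe_coe]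
  simp [finSuccEquiv_X_zero]

theorem fciEquiv_succ (k : Type) [Field k] (m : ℕ) (i : Fin (m + 3)) (j : Fin m)
    (hi : i.1 = j.1 + 3) :
    fciEquiv k m (X i) = Polynomial.C (Polynomial.C (Polynomial.C (X j))) := by
  obtain rfl : i = Fin.succ (Fin.succ (Fin.succ j)) := Fin.ext hi
  simp only [fciEquiv, AlgEquiv.trans_apply, finSuccEquiv_X_succ, Polynomial.coe_mapAlgEquiv,
    Polynomial.map_C, RingHom.coe_coe]

/-- `u_{2i+1}` after removing the first three variables. -/
def fciOdd (m : ℕ) (i : Fin m) : Fin (2 * m) := ⟨2 * i.1, by have := i.2; omega⟩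

/-- `u_{2i+2}` after removing the first three variables. -/
def fciEven (m : ℕ) (i : Fin m) : Fin (2 * m) := ⟨2 * i.1 + 1, by have := i.2; omega⟩

/-- `Σ x_i (x_i² + 3 y_i²)`. -/
noncomputable def fciP (k : Type) [Field k] (m : ℕ) : MvPolynomial (Fin (2 * m)) k :=
  ∑ i : Fin m, X (fciOdd m i) * (X (fciOdd m i) ^ 2 + 3 * X (fciEven m i) ^ 2)

/-- `Σ y_i (x_i² + 3 y_i²)`. -/
noncomputable def fciQ (k : Type) [Field k] (m : ℕ) : MvPolynomial (Fin (2 * m)) k :=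
  ∑ i : Fin m, X (fciEven m i) * (X (fciOdd m i) ^ 2 + 3 * X (fciEven m i) ^ 2)

theorem fciQ_ne_zero (k : Type) [Field k] [CharZero k] (m : ℕ) (hm : 1 ≤ m) : fciQ k m ≠ 0 := by
  intro h
  have h1 := congrArg (eval (fun j : Fin (2 * m) => if j.1 = 1 then (1 : k) else 0)) h
  rw [fciQ, map_sum, Finset.sum_eq_single (⟨0, hm⟩ : Fin m)] at h1
  · simp [fciOdd, fciEven] at h1
  · intro i _ hi
    have : i.1 ≠ 0 := fun h0 => hi (Fin.ext h0)
    simp [fciEven, this]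
  · simp

theorem fciAlpha_ne_zero (k : Type) [Field k] [CharZero k] (m : ℕ) (hm : 1 ≤ m) :
    fciP k m ^ 2 + 3 * fciQ k m ^ 2 ≠ 0 := by
  intro h
  have h1 := congrArg (eval (fun j : Fin (2 * m) => if j.1 = 0 then (1 : k) else 0)) h
  rw [map_add, map_pow, map_mul, map_pow, fciP, fciQ, map_sum, map_sum,
    Finset.sum_eq_single (⟨0, hm⟩ : Fin m),
    Finset.sum_eq_zero] at h1
  · simp [fciOdd, fciEven] at h1
  · intro i _
    simp [fciEven]
  · intro i _ hi
    have : i.1 ≠ 0 := fun h0 => hi (Fin.ext h0)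
    simp [fciOdd, this]
  · simp

theorem fci_evalA (k : Type) [Field k] (m : ℕ) {R : Type*} [CommRing R]
    (f : MvPolynomial (Fin (2 * (m + 1) + 1)) k →+* R) (g : MvPolynomial (Fin (2 * m)) k →+* R)
    (u x y : R) (h0 : f (X ⟨0, by omega⟩) = u) (h1 : f (X (oddVar (m + 1) 0)) = x)
    (h2 : f (X (evenVar (m + 1) 0)) = y)
    (h3 : ∀ i : Fin m, f (X (oddVar (m + 1) i.succ)) = g (X (fciOdd m i)))
    (h4 : ∀ i : Fin m, f (X (evenVar (m + 1) i.succ)) = g (X (fciEven m i))) :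
    f (Abar k (m + 1)) = (u ^ 3 + (g (fciP k m) + x ^ 3 + 3 * y ^ 2 * x))
      + 3 * (y * x ^ 2 + (3 * y ^ 3 + g (fciQ k m))) := by
  rw [Abar, map_add, map_pow, h0, map_sum, Fin.sum_univ_succ]
  simp only [map_add, map_sub, map_mul, map_pow, map_ofNat, h1, h2, h3, h4, fciP, fciQ, map_sum]
  have key : ∑ i : Fin m, (g (X (fciOdd m i)) ^ 3 + 3 * g (X (fciOdd m i)) ^ 2 * g (X (fciEven m i))
      + 3 * g (X (fciOdd m i)) * g (X (fciEven m i)) ^ 2 + 9 * g (X (fciEven m i)) ^ 3)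
      = ∑ i : Fin m, g (X (fciOdd m i)) * (g (X (fciOdd m i)) ^ 2 + 3 * g (X (fciEven m i)) ^ 2)
      + 3 * ∑ i : Fin m, g (X (fciEven m i))
        * (g (X (fciOdd m i)) ^ 2 + 3 * g (X (fciEven m i)) ^ 2) := by
    rw [Finset.mul_sum, ← Finset.sum_add_distrib]
    exact Finset.sum_congr rfl fun i _ => by ring
  rw [key]
  ring

theorem fci_evalB (k : Type) [Field k] (m : ℕ) {R : Type*} [CommRing R]
    (f : MvPolynomial (Fin (2 * (m + 1) + 1)) k →+* R) (g : MvPolynomial (Fin (2 * m)) k →+* R)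
    (u x y : R) (h0 : f (X ⟨0, by omega⟩) = u) (h1 : f (X (oddVar (m + 1) 0)) = x)
    (h2 : f (X (evenVar (m + 1) 0)) = y)
    (h3 : ∀ i : Fin m, f (X (oddVar (m + 1) i.succ)) = g (X (fciOdd m i)))
    (h4 : ∀ i : Fin m, f (X (evenVar (m + 1) i.succ)) = g (X (fciEven m i))) :
    f (Bbar k (m + 1)) = (u ^ 3 + (g (fciP k m) + x ^ 3 + 3 * y ^ 2 * x))
      - (y * x ^ 2 + (3 * y ^ 3 + g (fciQ k m))) := by
  rw [Bbar, map_add, map_pow, h0, map_sum, Fin.sum_univ_succ]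
  simp only [map_add, map_sub, map_mul, map_pow, map_ofNat, h1, h2, h3, h4, fciP, fciQ, map_sum]
  have key : ∑ i : Fin m, (g (X (fciOdd m i)) ^ 3 - g (X (fciOdd m i)) ^ 2 * g (X (fciEven m i))
      + 3 * g (X (fciOdd m i)) * g (X (fciEven m i)) ^ 2 - 3 * g (X (fciEven m i)) ^ 3)
      = ∑ i : Fin m, g (X (fciOdd m i)) * (g (X (fciOdd m i)) ^ 2 + 3 * g (X (fciEven m i)) ^ 2)
      - ∑ i : Fin m, g (X (fciEven m i))
        * (g (X (fciOdd m i)) ^ 2 + 3 * g (X (fciEven m i)) ^ 2) := by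
    rw [← Finset.sum_sub_distrib]
    exact Finset.sum_congr rfl fun i _ => by ring
  rw [key]
  ring

theorem fci_span_pair {R : Type*} [CommRing R] (c G H A B : R) (hc : c * 4 = 1)
    (hA : A = H + 3 * G) (hB : B = H - G) : (Ideal.span {A, B} : Ideal R) = Ideal.span {G, H} := by
  subst hA hB
  apply le_antisymm
  · rw [Ideal.span_le, Set.insert_subset_iff, Set.singleton_subset_iff]
    exact ⟨Ideal.mem_span_pair.2 ⟨3, 1, by ring⟩, Ideal.mem_span_pair.2 ⟨-1, 1, by ring⟩⟩
  · rw [Ideal.span_le, Set.insert_subset_iff, Set.singleton_subset_iff]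
    exact ⟨Ideal.mem_span_pair.2 ⟨c, -c, by linear_combination G * hc⟩,
      Ideal.mem_span_pair.2 ⟨c, 3 * c, by linear_combination H * hc⟩⟩

set_option maxSynthPendingDepth 10 in
theorem fci_transport (k : Type) [Field k] [CharZero k] (m : ℕ) (hm : 1 ≤ m)
    {S : Type*} [CommRing S] [IsDomain S] [UniqueFactorizationMonoid S] [CharZero S]
    (e : MvPolynomial (Fin (2 * (m + 1) + 1)) k ≃+* Polynomial (Polynomial (Polynomial S)))
    (g₀ : MvPolynomial (Fin (2 * m)) k →+* S) (hg : Function.Injective g₀)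
    (h0 : e (X ⟨0, by omega⟩) = Polynomial.X)
    (h1 : e (X (oddVar (m + 1) 0)) = Polynomial.C Polynomial.X)
    (h2 : e (X (evenVar (m + 1) 0)) = Polynomial.C (Polynomial.C Polynomial.X))
    (h3 : ∀ i : Fin m, e (X (oddVar (m + 1) i.succ))
      = Polynomial.C (Polynomial.C (Polynomial.C (g₀ (X (fciOdd m i))))))
    (h4 : ∀ i : Fin m, e (X (evenVar (m + 1) i.succ))
      = Polynomial.C (Polynomial.C (Polynomial.C (g₀ (X (fciEven m i)))))) :
    (Ideal.span {Abar k (m + 1), Bbar k (m + 1)}).IsPrime := by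
  have hα : g₀ (fciP k m) ^ 2 + 3 * g₀ (fciQ k m) ^ 2 ≠ 0 := by
    have h := (map_ne_zero_iff g₀ hg).2 (fciAlpha_ne_zero k m hm)
    simpa only [map_add, map_mul, map_pow, map_ofNat] using h
  have core := fci_core (g₀ (fciP k m)) (g₀ (fciQ k m))
    ((map_ne_zero_iff g₀ hg).2 (fciQ_ne_zero k m hm)) hα
  let g : MvPolynomial (Fin (2 * m)) k →+* Polynomial (Polynomial (Polynomial S)) :=
    (Polynomial.C.comp (Polynomial.C.comp Polynomial.C)).comp g₀
  let f : MvPolynomial (Fin (2 * (m + 1) + 1)) k →+* Polynomial (Polynomial (Polynomial S)) :=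
    e.toRingHom
  have eA := fci_evalA k m f g _ _ _ h0 h1 h2 h3 h4
  have eB := fci_evalB k m f g _ _ _ h0 h1 h2 h3 h4
  have hspan : (Ideal.span {Abar k (m + 1), Bbar k (m + 1)}).map f =
      Ideal.span {Polynomial.C (Polynomial.C Polynomial.X * Polynomial.X ^ 2
        + Polynomial.C (3 * Polynomial.X ^ 3 + Polynomial.C (g₀ (fciQ k m)))),
      Polynomial.X ^ 3 + Polynomial.C (Polynomial.C (Polynomial.C (g₀ (fciP k m)))
      + Polynomial.X ^ 3 + 3 * Polynomial.C Polynomial.X ^ 2 * Polynomial.X)} := by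
    have h4k : (4 : k) ≠ 0 := by norm_num
    rw [Ideal.map_span, Set.image_pair]
    refine fci_span_pair (f (C 4⁻¹)) _ _ _ _ ?_ (eA.trans ?_) (eB.trans ?_)
    · rw [← map_ofNat f 4, ← map_mul, ← map_ofNat (C : k →+* _) 4, ← map_mul,
        inv_mul_cancel₀ h4k, map_one, map_one]
    · simp only [g, RingHom.comp_apply, Polynomial.C_add, Polynomial.C_mul, Polynomial.C_pow,
        map_ofNat]
    · simp only [g, RingHom.comp_apply, Polynomial.C_add, Polynomial.C_mul, Polynomial.C_pow,
        map_ofNat]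
  rw [← hspan] at core
  have hq := Ideal.IsPrime.comap f (hK := core)
  rwa [Ideal.comap_map_of_bijective f e.bijective] at hq

/-- The ideal itself is prime. -/
theorem fci_span_isPrime (k : Type) [Field k] [CharZero k] (m : ℕ) (hm : 1 ≤ m) :
    (Ideal.span {Abar k (m + 1), Bbar k (m + 1)}).IsPrime :=
  fci_transport k m hm (S := MvPolynomial (Fin (2 * m)) k) (fciEquiv k (2 * m)).toRingEquiv
    (RingHom.id _) Function.injective_id
    (fciEquiv_zero k (2 * m) _ rfl) (fciEquiv_one k (2 * m) _ rfl) (fciEquiv_two k (2 * m) _ rfl)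
    (fun i => fciEquiv_succ k (2 * m) _ _ (by simp [oddVar, fciOdd]; ring))
    (fun i => fciEquiv_succ k (2 * m) _ _ (by simp [evenVar, fciEven]; ring))

/-- For `n ≥ 2` (over a field of characteristic zero), the complete
intersection `Y^{2n-2} = {Ā = B̄ = 0} ⊂ P^{2n}` is irreducible; algebraically, the
radical of the ideal `(Ā, B̄)` of `k[u₀, …, u_{2n}]` is prime. -/
theorem fermat_complete_intersection_irreducible (k : Type) [Field k] [CharZero k]
    (n : ℕ) (hn : 2 ≤ n) :
    (Ideal.span {Abar k n, Bbar k n}).radical.IsPrime := by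
  obtain ⟨m, rfl⟩ : ∃ m, n = m + 1 := ⟨n - 1, by omega⟩
  have h := fci_span_isPrime k m (by omega)
  rw [h.radical]
  exact h


end Main
end
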